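/- Let a₁, a₂, a₃, a₄ ∈ ℕ be distinct, and let V ⊆ ℚ⁴ be the ℚ-linear span of the vectors (a₁^i, a₂^i, a₃^i, a₄^i) for i = 0, 1, 2, with the convention 0⁰ = 1. Suppose there exist C > 0 and a real number ℓ ≥ 4 such that for every ergodic measure preserving system (X, ℬ, μ, T) and every A ∈ ℬ with μ(A) > 0, there exists a finite-rank Bohr₀ set S ⊆ ℕ with limsup_{N−M→∞} (1/|S ∩ [M,N)|) Σ_{n ∈ S ∩ [M,N)} μ(T^{−a₁n}A ∩ T^{−a₂n}A ∩ T^{−a₃n}A ∩ T^{−a₄n}A) ≥ C μ(A)^ℓ. Then there exists a constant β > 0, depending only on a₁, a₂, a₃, a₄ and ℓ, such that for every m ∈ ℕ there is N₀ with: for every N ≥ N₀ and every E ⊆ [N]^m one has D_{m,N}(V^m, E) ≥ C β^m d_{m,N}(E)^ℓ. -/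

import Mathlib

open MeasureTheory

/-- A finite-rank Bohr₀ set: `{n : ℕ | ‖nα‖ < δ}` for some `α` in a finite-dimensional torus. -/
def IsFiniteRankBohr0 (S : Set ℕ) : Prop :=
  ∃ (r : ℕ) (α : Fin r → AddCircle (1 : ℝ)) (δ : ℝ), 0 < δ ∧
    S = {n : ℕ | ∀ j, ‖n • α j‖ < δ}

/-- `q : Fin d → Fin m → ℕ` satisfies the condition `V^m`: for every coordinate `j`,
the vector `(q 0 j, …, q (d-1) j)` lies in `V`. -/
def inVm {d m : ℕ} (V : Submodule ℚ (Fin d → ℚ)) (q : Fin d → Fin m → ℕ) : Prop :=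
  ∀ j : Fin m, (fun i : Fin d => ((q i j : ℕ) : ℚ)) ∈ V

/-- The density `d_{m,N}(E) = |E| / N^m`. -/
noncomputable def dmn (m N : ℕ) (E : Set (Fin m → ℕ)) : ℝ :=
  (E.ncard : ℝ) / (N : ℝ) ^ m

/-- The density `D_{m,N}(V^m, E)` of solutions of the linear system determined by `V`
with entries in `E`, among all solutions with entries in `[N]^m`. -/
noncomputable def Dmn {d : ℕ} (V : Submodule ℚ (Fin d → ℚ)) (m N : ℕ)
    (E : Set (Fin m → ℕ)) : ℝ :=
  (Set.ncard {q : Fin d → Fin m → ℕ | (∀ i, q i ∈ E) ∧ inVm V q} : ℝ) /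
    (Set.ncard {q : Fin d → Fin m → ℕ | (∀ i j, q i j < N) ∧ inVm V q} : ℝ)

/-!
For irrational `α`, the skew shift `(x, y) ↦ (x + α, y + 2x + α)` is ergodic, and its second
coordinate at time `a * n` is the quadratic polynomial `y + 2nx * a + n²α * a²` in `a`. Since `n²α`
equidistributes along every Bohr set, recurrence for the cylinder `{(x, y) | y ∈ A}` bounds from
below the measure of the quadratic polynomials on the circle whose values at all `a i` lie in `A`.

Now let `A` be the union of small balls around the points of the circle whose expansions in a large
base have the vectors of `E` as digits. The linear relations between the values of a quadratic
polynomial hold approximately between the centers of the balls containing these values, so they hold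
digit by digit. Hence each polynomial counted above produces a configuration in `E`, and a given
configuration arises only from a set of polynomials of the measure of a box, since three values
determine a quadratic polynomial.
-/

open Filter

section UniformMean

variable {E : Type*} [SeminormedAddCommGroup E]

/-- Averages of `u` over long intervals have norm at most `c`, uniformly in the position of the
interval. Stated with sums instead of averages to avoid dividing by the length. -/
def UniformMeanLE (u : ℕ → E) (c : ℝ) : Prop :=
  ∀ᶠ l : ℕ in atTop, ∀ M, ‖∑ n ∈ Finset.range l, u (M + n)‖ ≤ c * l

/-- Averages of `u` over long intervals tend to zero, uniformly in the position of the interval. -/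
def UniformMeanZero (u : ℕ → E) : Prop :=
  ∀ ε : ℝ, 0 < ε → UniformMeanLE u ε

theorem UniformMeanLE.mono {u : ℕ → E} {c d : ℝ} (hu : UniformMeanLE u c) (hcd : c ≤ d) :
    UniformMeanLE u d := by
  filter_upwards [hu] with l hl M
  exact (hl M).trans (by gcongr)

theorem UniformMeanLE.add {u v : ℕ → E} {c d : ℝ} (hu : UniformMeanLE u c)
    (hv : UniformMeanLE v d) : UniformMeanLE (fun n => u n + v n) (c + d) := by
  filter_upwards [hu, hv] with l hul hvl M
  rw [Finset.sum_add_distrib, add_mul]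
  exact (norm_add_le _ _).trans (add_le_add (hul M) (hvl M))

theorem uniformMeanLE_of_norm_le {u : ℕ → E} {c : ℝ} (hu : ∀ n, ‖u n‖ ≤ c) :
    UniformMeanLE u c :=
  .of_forall fun l M => (norm_sum_le_of_le _ fun n _ => hu (M + n)).trans_eq <| by
    simp [mul_comm]

theorem uniformMeanLE_sum {ι : Type*} {s : Finset ι} {u : ι → ℕ → E} {c : ι → ℝ}
    (hu : ∀ i ∈ s, UniformMeanLE (u i) (c i)) :
    UniformMeanLE (fun n => ∑ i ∈ s, u i n) (∑ i ∈ s, c i) := by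
  filter_upwards [(eventually_all_finset s).2 hu] with l hl M
  rw [Finset.sum_comm, Finset.sum_mul]
  exact norm_sum_le_of_le _ fun i hi => hl i hi M

theorem UniformMeanLE.of_norm_le {u : ℕ → E} {v : ℕ → ℝ} {c : ℝ} (hv : UniformMeanLE v c)
    (huv : ∀ n, ‖u n‖ ≤ v n) : UniformMeanLE u c := by
  filter_upwards [hv] with l hl M
  exact (norm_sum_le_of_le _ fun n _ => huv (M + n)).trans ((le_abs_self _).trans (hl M))

theorem uniformMeanLE_of_sq {v : ℕ → ℝ} {c : ℝ} (hc : 0 ≤ c)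
    (hv : UniformMeanLE (fun n => v n ^ 2) (c ^ 2)) : UniformMeanLE v c := by
  filter_upwards [hv] with l hl M
  rw [Real.norm_eq_abs]
  refine abs_le_of_sq_le_sq ?_ (by positivity)
  calc (∑ n ∈ Finset.range l, v (M + n)) ^ 2
      ≤ l * ∑ n ∈ Finset.range l, v (M + n) ^ 2 := by
        simpa using sq_sum_le_card_mul_sum_sq (s := Finset.range l) (f := fun n => v (M + n))
    _ ≤ l * (c ^ 2 * l) := by
        gcongr
        exact (le_abs_self _).trans (hl M)
    _ = (c * l) ^ 2 := by ring

theorem UniformMeanLE.const_smul {𝕜 : Type*} [NormedField 𝕜] [NormedSpace 𝕜 E] {u : ℕ → E}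
    {c : ℝ} (hu : UniformMeanLE u c) (k : 𝕜) : UniformMeanLE (fun n => k • u n) (‖k‖ * c) := by
  filter_upwards [hu] with l hl M
  rw [← Finset.smul_sum, norm_smul, mul_assoc]
  gcongr
  exact hl M

theorem uniformMeanZero_zero : UniformMeanZero (fun _ => (0 : E)) := fun _ hε =>
  uniformMeanLE_of_norm_le fun _ => norm_zero.trans_le hε.le

theorem UniformMeanZero.add {u v : ℕ → E} (hu : UniformMeanZero u) (hv : UniformMeanZero v) :
    UniformMeanZero (fun n => u n + v n) := fun ε hε =>
  ((hu _ (half_pos hε)).add (hv _ (half_pos hε))).mono (add_halves ε).le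

theorem UniformMeanZero.const_smul {𝕜 : Type*} [NormedField 𝕜] [NormedSpace 𝕜 E] {u : ℕ → E}
    (hu : UniformMeanZero u) (k : 𝕜) : UniformMeanZero (fun n => k • u n) := fun ε hε =>
  ((hu (ε / (‖k‖ + 1)) (by positivity)).const_smul k).mono <| by
    rw [mul_div_left_comm]
    exact mul_le_of_le_one_right hε.le ((div_le_one (by positivity)).2 (by linarith))

theorem uniformMeanZero_sum {ι : Type*} {s : Finset ι} {u : ι → ℕ → E}
    (hu : ∀ i ∈ s, UniformMeanZero (u i)) : UniformMeanZero (fun n => ∑ i ∈ s, u i n) := by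
  intro ε hε
  refine (uniformMeanLE_sum fun i hi => hu i hi (ε / (s.card + 1)) (by positivity)).mono ?_
  rw [Finset.sum_const, nsmul_eq_mul, mul_div_left_comm]
  exact mul_le_of_le_one_right hε.le ((div_le_one (by positivity)).2 (by linarith))

theorem uniformMeanZero_of_norm_sum_le {u : ℕ → E} {B : ℝ}
    (hu : ∀ M l, ‖∑ n ∈ Finset.range l, u (M + n)‖ ≤ B) : UniformMeanZero u := by
  intro ε hε
  filter_upwards [tendsto_natCast_atTop_atTop.eventually_ge_atTop (B / ε)] with l hl M
  exact (hu M l).trans ((div_le_iff₀' hε).1 hl)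

theorem uniformMeanZero_sub_shift {u : ℕ → E} {B : ℝ} (hu : ∀ n, ‖u n‖ ≤ B) (h : ℕ) :
    UniformMeanZero (fun n => u n - u (n + h)) := by
  refine uniformMeanZero_of_norm_sum_le (B := h * B + h * B) fun M l => ?_
  have telescope : ∑ n ∈ Finset.range l, (u (M + n) - u (M + n + h)) =
      ∑ n ∈ Finset.range h, u (M + n) - ∑ n ∈ Finset.range h, u (M + l + n) := by
    have e₁ := Finset.sum_range_add (fun n => u (M + n)) l h
    have e₂ := Finset.sum_range_add (fun n => u (M + n)) h l
    rw [add_comm h l, e₁] at e₂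
    rw [Finset.sum_sub_distrib, sub_eq_sub_iff_add_eq_add]
    simpa only [← add_assoc, add_right_comm M h] using e₂
  have short (k : ℕ) : ‖∑ n ∈ Finset.range h, u (k + n)‖ ≤ h * B := by
    simpa using norm_sum_le_of_le (Finset.range h) fun n _ => hu (k + n)
  rw [telescope]
  exact (norm_sub_le _ _).trans (add_le_add (short M) (short (M + l)))

theorem uniformMeanZero_ofReal_iff {u : ℕ → ℝ} :
    UniformMeanZero (fun n => (u n : ℂ)) ↔ UniformMeanZero u := by
  simp only [UniformMeanZero, UniformMeanLE, ← Complex.ofReal_sum, Complex.norm_real]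

end UniformMean

section VanDerCorput

open ComplexConjugate

theorem uniformMeanLE_sq_norm_sum_shift {e : ℕ → ℂ} (he : ∀ n, ‖e n‖ ≤ 1)
    (hcorr : ∀ h h' : ℕ, h ≠ h' → UniformMeanZero fun n => e (n + h) * conj (e (n + h')))
    (H : Finset ℕ) {ε : ℝ} (hε : 0 < ε) :
    UniformMeanLE (fun n => ‖∑ h ∈ H, e (n + h)‖ ^ 2) (H.card + ε) := by
  have diagonal : UniformMeanLE (fun n => ∑ h ∈ H, e (n + h) * conj (e (n + h))) H.card := by
    simpa using uniformMeanLE_sum (s := H) (c := fun _ => 1) fun h _ =>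
      uniformMeanLE_of_norm_le fun n => by
        rw [norm_mul, RCLike.norm_conj]
        exact mul_le_one₀ (he _) (norm_nonneg _) (he _)
  have off_diagonal : UniformMeanZero
      (fun n => ∑ h ∈ H, ∑ h' ∈ H.erase h, e (n + h) * conj (e (n + h'))) :=
    uniformMeanZero_sum fun h _ => uniformMeanZero_sum fun h' hh' =>
      hcorr h h' (Finset.ne_of_mem_erase hh').symm
  have expand (n : ℕ) : ((‖∑ h ∈ H, e (n + h)‖ ^ 2 : ℝ) : ℂ) =
      ∑ h ∈ H, e (n + h) * conj (e (n + h)) +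
        ∑ h ∈ H, ∑ h' ∈ H.erase h, e (n + h) * conj (e (n + h')) := by
    push_cast
    rw [← Complex.mul_conj', map_sum, Finset.sum_mul_sum, ← Finset.sum_add_distrib]
    exact Finset.sum_congr rfl fun h hh => (Finset.add_sum_erase H _ hh).symm
  have hsum := diagonal.add (off_diagonal ε hε)
  simpa only [← expand, UniformMeanLE, ← Complex.ofReal_sum, Complex.norm_real] using hsum

/-- Averaging `w n * e n` over shifts `h` that almost preserve `w` replaces `e n` by
`∑ h, e (n + h)`, which is small in mean square. -/
theorem uniformMeanZero_mul_of_almost_invariant {w e : ℕ → ℂ} (hw : ∀ n, ‖w n‖ ≤ 1)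
    (he : ∀ n, ‖e n‖ ≤ 1)
    (hinv : ∀ ε : ℝ, 0 < ε → {h | UniformMeanLE (fun n => ‖w (n + h) - w n‖) ε}.Infinite)
    (hcorr : ∀ h h' : ℕ, h ≠ h' → UniformMeanZero fun n => e (n + h) * conj (e (n + h'))) :
    UniformMeanZero fun n => w n * e n := by
  intro ε hε
  obtain ⟨J, hJ⟩ := exists_nat_gt (8 / ε ^ 2)
  have hJ0 : (0 : ℝ) < J := lt_trans (by positivity) hJ
  obtain ⟨H, hHinv, hHcard⟩ := (hinv (ε / 4) (by positivity)).exists_subset_card_eq J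
  have hwe (n : ℕ) : ‖w n * e n‖ ≤ 1 := by
    rw [norm_mul]
    exact mul_le_one₀ (hw n) (norm_nonneg _) (he n)
  have translate : UniformMeanLE (fun n => ∑ h ∈ H, (w n * e n - w (n + h) * e (n + h)))
      (J * (ε / 4)) := by
    simpa [hHcard] using uniformMeanLE_sum (s := H) fun h _ =>
      uniformMeanZero_sub_shift hwe h (ε / 4) (by positivity)
  have freeze : UniformMeanLE (fun n => ∑ h ∈ H, (w (n + h) - w n) * e (n + h))
      (J * (ε / 4)) := by
    have hH : ∀ h ∈ H, UniformMeanLE (fun n => ‖w (n + h) - w n‖) (ε / 4) := fun h hh => hHinv hh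
    simpa [hHcard] using uniformMeanLE_sum (s := H) fun h hh => (hH h hh).of_norm_le fun n => by
      rw [norm_mul]
      exact mul_le_of_le_one_right (norm_nonneg _) (he _)
  have square : UniformMeanLE (fun n => w n * ∑ h ∈ H, e (n + h)) (J * (ε / 2)) := by
    refine (uniformMeanLE_of_sq (by positivity)
      ((uniformMeanLE_sq_norm_sum_shift he hcorr H hJ0).mono ?_)).of_norm_le fun n => ?_
    · rw [hHcard]
      rw [div_lt_iff₀ (by positivity)] at hJ
      nlinarith
    · rw [norm_mul]
      exact mul_le_of_le_one_left (norm_nonneg _) (hw n)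
  have scaled := ((translate.add freeze).add square).const_smul (J : ℂ)⁻¹
  have hJC : (J : ℂ) ≠ 0 := by exact_mod_cast hJ0.ne'
  convert scaled using 1
  · funext n
    simp only [sub_mul, Finset.sum_sub_distrib, Finset.sum_const, hHcard, nsmul_eq_mul,
      ← Finset.mul_sum, smul_eq_mul]
    field_simp
    ring
  · rw [norm_inv, Complex.norm_natCast]
    field_simp
    ring

theorem coe_toCircle_ne_one {β : UnitAddCircle} (hβ : β ≠ 0) :
    (AddCircle.toCircle β : ℂ) ≠ 1 := fun h =>
  hβ <| AddCircle.injective_toCircle one_ne_zero <| by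
    rw [AddCircle.toCircle_zero]
    exact Subtype.ext h

theorem uniformMeanZero_toCircle_nsmul_add {β : UnitAddCircle} (hβ : β ≠ 0) (γ : UnitAddCircle) :
    UniformMeanZero fun n => (AddCircle.toCircle (n • β + γ) : ℂ) := by
  have hne := coe_toCircle_ne_one hβ
  refine uniformMeanZero_of_norm_sum_le (B := 2 / ‖(AddCircle.toCircle β : ℂ) - 1‖) fun M l => ?_
  have geometric (n : ℕ) : (AddCircle.toCircle ((M + n) • β + γ) : ℂ) =
      AddCircle.toCircle (M • β + γ) * (AddCircle.toCircle β : ℂ) ^ n := by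
    rw [add_smul, add_right_comm, AddCircle.toCircle_add, AddCircle.toCircle_nsmul β n]
    push_cast
    rfl
  simp only [geometric]
  rw [← Finset.mul_sum, norm_mul, Circle.norm_coe, one_mul, geom_sum_eq hne, norm_div]
  gcongr
  refine (norm_sub_le _ _).trans_eq ?_
  rw [norm_pow, Circle.norm_coe, one_pow, norm_one]
  norm_num

theorem uniformMeanZero_toCircle_sq_correlation {α : UnitAddCircle} (hα : ¬IsOfFinAddOrder α)
    {h h' : ℕ} (hh : h ≠ h') :
    UniformMeanZero fun n => (AddCircle.toCircle ((n + h) ^ 2 • α) : ℂ) *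
      conj (AddCircle.toCircle ((n + h') ^ 2 • α) : ℂ) := by
  have hne : (2 * ((h : ℤ) - h')) • α ≠ 0 := fun h0 => by
    have := injective_zsmul_iff_not_isOfFinAddOrder.2 hα (h0.trans (zero_smul ℤ α).symm)
    omega
  have := uniformMeanZero_toCircle_nsmul_add hne (((h : ℤ) ^ 2 - (h' : ℤ) ^ 2) • α)
  convert this using 2 with n
  rw [← Circle.coe_inv_eq_conj, ← Circle.coe_mul, ← AddCircle.toCircle_neg,
    ← AddCircle.toCircle_add]
  congr 2
  module

end VanDerCorput


section Equidistribution

theorem uniformMeanZero_of_dense_span {E F : Type*} [SeminormedAddCommGroup E] [NormedSpace ℂ E]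
    [SeminormedAddCommGroup F] [NormedSpace ℂ F] {Λ : ℕ → E →ₗ[ℂ] F} {B : ℝ}
    (hΛ : ∀ n g, ‖Λ n g‖ ≤ B * ‖g‖) {s : Set E}
    (hs : (Submodule.span ℂ s).topologicalClosure = ⊤)
    (h : ∀ g ∈ s, UniformMeanZero fun n => Λ n g) (g : E) : UniformMeanZero fun n => Λ n g := by
  have on_span : ∀ p ∈ Submodule.span ℂ s, UniformMeanZero fun n => Λ n p := fun p hp => by
    induction hp using Submodule.span_induction with
    | mem p hp => exact h p hp
    | zero => simpa only [map_zero] using uniformMeanZero_zero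
    | add p q _ _ hp hq => simpa only [map_add] using hp.add hq
    | smul c p _ hp => simpa only [map_smul] using hp.const_smul c
  intro ε hε
  have hg : g ∈ closure (Submodule.span ℂ s : Set E) := by
    rw [← Submodule.topologicalClosure_coe, hs]
    trivial
  obtain ⟨p, hp, hgp⟩ := Metric.mem_closure_iff.1 hg (ε / 2 / (|B| + 1)) (by positivity)
  have near : UniformMeanLE (fun n => Λ n (g - p)) (ε / 2) := uniformMeanLE_of_norm_le fun n => by
    rw [dist_eq_norm, lt_div_iff₀' (by positivity)] at hgp
    refine (hΛ n _).trans (le_trans ?_ hgp.le)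
    gcongr
    linarith [le_abs_self B]
  simpa only [map_sub, sub_add_cancel, add_halves] using near.add (on_span p hp _ (half_pos hε))

instance : IsProbabilityMeasure (volume : Measure UnitAddCircle) :=
  ⟨by simp [AddCircle.measure_univ]⟩

theorem uniformMeanZero_of_fourier {w : ℕ → ℂ} (hw : ∀ n, ‖w n‖ ≤ 1) {x : ℕ → UnitAddCircle}
    (h : ∀ k ≠ 0, UniformMeanZero fun n => w n * fourier k (x n)) (g : C(UnitAddCircle, ℂ)) :
    UniformMeanZero fun n => w n * (g (x n) - ∫ y, g y) := by
  have integrable (g : C(UnitAddCircle, ℂ)) : Integrable g :=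
    g.continuous.integrable_of_hasCompactSupport (.of_compactSpace _)
  let Λ (n : ℕ) : C(UnitAddCircle, ℂ) →ₗ[ℂ] ℂ :=
    { toFun := fun g => w n * (g (x n) - ∫ y, g y)
      map_add' := fun p q => by
        simp only [ContinuousMap.add_apply, integral_add (integrable p) (integrable q)]
        ring
      map_smul' := fun c p => by
        simp only [ContinuousMap.smul_apply, smul_eq_mul, integral_const_mul, RingHom.id_apply]
        ring }
  refine uniformMeanZero_of_dense_span (Λ := Λ) (B := 2) (fun n g => ?_)
    span_fourier_closure_eq_top ?_ g
  · have hint : ‖∫ y, g y‖ ≤ ‖g‖ := by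
      simpa using norm_integral_le_of_norm_le_const (μ := volume) (.of_forall g.norm_coe_le_norm)
    calc ‖w n * (g (x n) - ∫ y, g y)‖ ≤ 1 * (‖g‖ + ‖g‖) := by
          rw [norm_mul]
          gcongr
          · exact hw n
          · exact (norm_sub_le _ _).trans (add_le_add (g.norm_coe_le_norm _) hint)
      _ = 2 * ‖g‖ := by ring
  · rintro _ ⟨k, rfl⟩
    rcases eq_or_ne k 0 with rfl | hk
    · simpa [Λ] using uniformMeanZero_zero
    · have hint : ∫ y : UnitAddCircle, fourier k y = 0 :=
        integral_eq_zero_of_add_right_eq_neg (fourier_add_half_inv_index hk one_pos)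
      simpa only [Λ, LinearMap.coe_mk, AddHom.coe_mk, hint, sub_zero] using h k hk

theorem uniformMeanZero_mul_sq_smul {w : ℕ → ℂ} (hw : ∀ n, ‖w n‖ ≤ 1)
    (hinv : ∀ ε : ℝ, 0 < ε → {h | UniformMeanLE (fun n => ‖w (n + h) - w n‖) ε}.Infinite)
    {α : UnitAddCircle} (hα : ¬IsOfFinAddOrder α) (g : C(UnitAddCircle, ℂ)) :
    UniformMeanZero fun n => w n * (g (n ^ 2 • α) - ∫ y, g y) := by
  refine uniformMeanZero_of_fourier hw (fun k hk => ?_) g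
  have hkα : ¬IsOfFinAddOrder (k • α) := by
    rw [← injective_zsmul_iff_not_isOfFinAddOrder] at hα ⊢
    simpa only [Function.comp_def, mul_smul] using hα.comp (mul_left_injective₀ hk)
  simp only [fourier_apply, smul_comm k]
  exact uniformMeanZero_mul_of_almost_invariant hw (fun n => (Circle.norm_coe _).le) hinv
    fun h h' hh => uniformMeanZero_toCircle_sq_correlation hkα hh

end Equidistribution

section BohrSet

theorem uniformMeanLE_indicator_of_separated {S : Set ℕ} {Q : ℕ} (hQ : Q ≠ 0)
    (hS : ∀ n, ∀ h < Q, n ∈ S → n + h ∈ S → h = 0) :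
    UniformMeanLE (S.indicator (1 : ℕ → ℝ)) (2 / Q) := by
  classical
  filter_upwards [eventually_ge_atTop Q] with l hl M
  have card_le : ((Finset.range l).filter (M + · ∈ S)).card ≤ l / Q + 1 := by
    rw [← Finset.card_range (l / Q + 1)]
    refine Finset.card_le_card_of_injOn (· / Q) (fun n hn => ?_) fun n hn n' hn' heq => ?_
    · simp only [Finset.coe_filter, Finset.mem_range, Set.mem_ofPred_eq] at hn
      simpa using Nat.lt_succ_of_le (Nat.div_le_div_right hn.1.le)
    · simp only [Finset.coe_filter, Finset.mem_range, Set.mem_ofPred_eq] at hn hn' heq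
      wlog hle : n ≤ n' generalizing n n'
      · exact (this n' n heq.symm hn' hn (le_of_not_ge hle)).symm
      have hlt : n' - n < Q := by
        have := Nat.div_add_mod n Q
        have := Nat.div_add_mod n' Q
        have := Nat.mod_lt n' (Nat.pos_of_ne_zero hQ)
        rw [heq] at *
        omega
      have := hS (M + n) (n' - n) hlt hn.2 (by rw [add_assoc, Nat.add_sub_of_le hle]; exact hn'.2)
      omega
  have hsum : ∑ n ∈ Finset.range l, S.indicator (1 : ℕ → ℝ) (M + n) =
      ((Finset.range l).filter (M + · ∈ S)).card := by
    simp [Set.indicator_apply, Finset.sum_boole]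
  rw [hsum, Real.norm_natCast]
  have hQ' : (0 : ℝ) < Q := by positivity
  have one_le : (1 : ℝ) ≤ l / Q := (one_le_div hQ').2 (by exact_mod_cast hl)
  calc (((Finset.range l).filter (M + · ∈ S)).card : ℝ) ≤ ((l / Q : ℕ) : ℝ) + 1 := by
        exact_mod_cast card_le
    _ ≤ l / Q + l / Q := add_le_add Nat.cast_div_le one_le
    _ = 2 / Q * l := by ring

theorem exists_pos_forall_nsmul_eq_zero {G : Type*} [NormedAddCommGroup G] (θ : G) (Q : ℕ) :
    ∃ κ : ℝ, 0 < κ ∧ ∀ h < Q, ‖h • θ‖ < κ → h • θ = 0 := by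
  have : ∀ᶠ κ : ℝ in nhdsWithin 0 (Set.Ioi 0),
      ∀ h ∈ Finset.range Q, ‖h • θ‖ < κ → h • θ = 0 := by
    refine (eventually_all_finset _).2 fun h _ => ?_
    by_cases h0 : h • θ = 0
    · exact .of_forall fun _ _ => h0
    · filter_upwards [Ioo_mem_nhdsGT (norm_pos_iff.2 h0)] with κ hκ hlt
      exact absurd hlt hκ.2.not_gt
  obtain ⟨κ, hκ, hpos⟩ := (this.and self_mem_nhdsWithin).exists
  exact ⟨κ, hpos, fun h hh => hκ h (Finset.mem_range.2 hh)⟩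

theorem norm_sub_or_norm_add_le_of_abs_norm_sub_le {x : UnitAddCircle} {δ κ : ℝ}
    (h : |‖x‖ - δ| ≤ κ) : ‖x - (δ : UnitAddCircle)‖ ≤ κ ∨ ‖x + (δ : UnitAddCircle)‖ ≤ κ := by
  obtain ⟨s, hs, rfl⟩ : ∃ s : ℝ, |s| ≤ 1 / 2 ∧ (s : UnitAddCircle) = x := by
    obtain ⟨s, rfl⟩ := (AddCircle.equivIoc (1 : ℝ) (-1 / 2)).symm.surjective x
    exact ⟨s, abs_le.2 ⟨by linarith [s.2.1], by linarith [s.2.2]⟩, rfl⟩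
  rw [(AddCircle.norm_coe_eq_abs_iff (1 : ℝ) one_ne_zero).2 (by simpa using hs)] at h
  rw [← AddCircle.coe_sub, ← AddCircle.coe_add]
  rcases abs_choice s with hs' | hs' <;> rw [hs'] at h
  · exact .inl ((QuotientAddGroup.norm_mk_le_norm).trans h)
  · refine .inr ((QuotientAddGroup.norm_mk_le_norm).trans ?_)
    rwa [← norm_neg, neg_add']

theorem uniformMeanLE_indicator_norm_sub_lt {θ : UnitAddCircle} {Q : ℕ} (hQ : Q ≠ 0) {κ : ℝ}
    (hκ : ∀ h < Q, ‖h • θ‖ < κ → h = 0) (c : UnitAddCircle) :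
    UniformMeanLE ({n : ℕ | ‖n • θ - c‖ < κ / 2}.indicator (1 : ℕ → ℝ)) (2 / Q) := by
  refine uniformMeanLE_indicator_of_separated hQ fun n h hh hn hnh => hκ h hh ?_
  calc ‖h • θ‖ = ‖((n + h) • θ - c) - (n • θ - c)‖ := by rw [add_smul]; congr 1; abel
    _ ≤ ‖(n + h) • θ - c‖ + ‖n • θ - c‖ := norm_sub_le _ _
    _ < κ / 2 + κ / 2 := add_lt_add hnh hn
    _ = κ := add_halves κ

theorem norm_indicator_shift_sub_le {θ : UnitAddCircle} {δ κ : ℝ} {h : ℕ} (hh : ‖h • θ‖ < κ)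
    (n : ℕ) :
    ‖{n : ℕ | ‖n • θ‖ < δ}.indicator (1 : ℕ → ℝ) (n + h) -
        {n : ℕ | ‖n • θ‖ < δ}.indicator 1 n‖ ≤
      {n : ℕ | ‖n • θ - (δ : UnitAddCircle)‖ < κ}.indicator 1 n +
        {n : ℕ | ‖n • θ - -(δ : UnitAddCircle)‖ < κ}.indicator 1 n := by
  by_cases hiff : ‖(n + h) • θ‖ < δ ↔ ‖n • θ‖ < δ
  · have : {n : ℕ | ‖n • θ‖ < δ}.indicator (1 : ℕ → ℝ) (n + h) =
        {n : ℕ | ‖n • θ‖ < δ}.indicator 1 n := by simp [Set.indicator_apply, hiff]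
    rw [this, sub_self, norm_zero]
    exact add_nonneg (Set.indicator_nonneg (fun _ _ => zero_le_one) _)
      (Set.indicator_nonneg (fun _ _ => zero_le_one) _)
  have hstep : |‖(n + h) • θ‖ - ‖n • θ‖| < κ :=
    (abs_norm_sub_norm_le _ _).trans_lt (by rwa [add_smul, add_sub_cancel_left])
  have hδ : |‖n • θ‖ - δ| < κ := by
    rw [abs_lt] at hstep ⊢
    rcases lt_or_ge ‖n • θ‖ δ with hlt | hge
    · have : δ ≤ ‖(n + h) • θ‖ := not_lt.1 fun h' => hiff (iff_of_true h' hlt)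
      constructor <;> linarith
    · have : ‖(n + h) • θ‖ < δ := by simpa [hge.not_gt] using hiff
      constructor <;> linarith
  have hnear := norm_sub_or_norm_add_le_of_abs_norm_sub_le le_rfl (x := n • θ) (δ := δ)
  rw [← sub_neg_eq_add] at hnear
  have hle (S T : Set ℕ) (hn : n ∈ S ∪ T) : 1 ≤ S.indicator (1 : ℕ → ℝ) n + T.indicator 1 n := by
    rcases hn with hn | hn <;> simp [hn, Set.indicator_nonneg]
  refine le_trans ?_ (hle _ _ (hnear.imp (·.trans_lt hδ) (·.trans_lt hδ)))
  by_cases h₁ : ‖(n + h) • θ‖ < δ <;> by_cases h₂ : ‖n • θ‖ < δ <;> simp [h₁, h₂]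

theorem exists_uniformMeanLE_indicator_shift_sub (θ : UnitAddCircle) (δ : ℝ) {ε : ℝ} (hε : 0 < ε) :
    ∃ κ : ℝ, 0 < κ ∧ ∀ h : ℕ, ‖h • θ‖ < κ → UniformMeanLE (fun n =>
      ‖{n : ℕ | ‖n • θ‖ < δ}.indicator (1 : ℕ → ℝ) (n + h) -
        {n : ℕ | ‖n • θ‖ < δ}.indicator 1 n‖) ε := by
  by_cases hθ : IsOfFinAddOrder θ
  · obtain ⟨κ, hκ, hzero⟩ := exists_pos_forall_nsmul_eq_zero θ (addOrderOf θ)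
    refine ⟨κ, hκ, fun h hh => (uniformMeanZero_zero (E := ℝ) ε hε).of_norm_le fun n => ?_⟩
    rw [← mod_addOrderOf_nsmul] at hh
    have h0 : h • θ = 0 := by
      rw [← mod_addOrderOf_nsmul]
      exact hzero _ (Nat.mod_lt _ hθ.addOrderOf_pos) hh
    simp [Set.indicator_apply, add_smul, h0]
  · obtain ⟨Q, hQ⟩ := exists_nat_gt (4 / ε)
    have hQ0 : (0 : ℝ) < Q := lt_trans (by positivity) hQ
    obtain ⟨κ, hκ, hzero⟩ := exists_pos_forall_nsmul_eq_zero θ Q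
    have hzero' : ∀ h < Q, ‖h • θ‖ < κ → h = 0 := fun h hh hlt =>
      injective_nsmul_iff_not_isOfFinAddOrder.2 hθ ((hzero h hh hlt).trans (zero_smul ℕ θ).symm)
    have hQ' : Q ≠ 0 := by exact_mod_cast hQ0.ne'
    refine ⟨κ / 2, half_pos hκ, fun h hh => UniformMeanLE.of_norm_le
      (((uniformMeanLE_indicator_norm_sub_lt hQ' hzero' δ).add
        (uniformMeanLE_indicator_norm_sub_lt hQ' hzero' (-δ))).mono ?_) fun n => ?_⟩
    · rw [div_lt_iff₀ hε] at hQ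
      rw [← add_div, div_le_iff₀ hQ0]
      linarith
    · rw [norm_norm]
      exact norm_indicator_shift_sub_le hh n

theorem norm_indicator_iInter_sub_le {X ι : Type*} [Fintype ι] (S : ι → Set X) (x y : X) :
    ‖(⋂ j, S j).indicator (1 : X → ℝ) x - (⋂ j, S j).indicator 1 y‖ ≤
      ∑ j, ‖(S j).indicator (1 : X → ℝ) x - (S j).indicator 1 y‖ := by
  classical
  by_cases hiff : ∀ j, x ∈ S j ↔ y ∈ S j
  · simp [Set.indicator_apply, hiff]
  · push Not at hiff
    obtain ⟨j, hj⟩ := hiff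
    have one_le : 1 ≤ ‖(S j).indicator (1 : X → ℝ) x - (S j).indicator 1 y‖ := by
      rcases hj with ⟨hx, hy⟩ | ⟨hx, hy⟩ <;> simp [hx, hy]
    refine le_trans ?_ (one_le.trans (Finset.single_le_sum
      (f := fun j => ‖(S j).indicator (1 : X → ℝ) x - (S j).indicator 1 y‖)
      (fun j _ => norm_nonneg _) (Finset.mem_univ j)))
    by_cases hx : x ∈ ⋂ j, S j <;> by_cases hy : y ∈ ⋂ j, S j <;> simp [hx, hy]

namespace IsFiniteRankBohr0

variable {S : Set ℕ}

theorem exists_syndetic_gap (hS : IsFiniteRankBohr0 S) : ∃ q : ℕ, ∀ n, ∃ k ≤ q, n + k ∈ S := by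
  obtain ⟨r, θ, δ, hδ, rfl⟩ := hS
  obtain ⟨t, hsub, hfin, hcover⟩ := Metric.finite_approx_of_totallyBounded
    ((isCompact_univ.totallyBounded (s := (Set.univ : Set (Fin r → UnitAddCircle)))).subset
      (Set.subset_univ (Set.range fun n : ℕ => n • θ))) δ hδ
  choose! f hf using fun x (hx : x ∈ t) => hsub hx
  obtain ⟨q, hq⟩ := (hfin.image f).bddAbove
  refine ⟨q, fun n => ?_⟩
  obtain ⟨x, hx, hdist⟩ := Set.mem_iUnion₂.1 (hcover ⟨n + q, rfl⟩)
  have hle : f x ≤ q := hq ⟨x, hx, rfl⟩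
  refine ⟨q - f x, Nat.sub_le _ _, fun j => ?_⟩
  have hdiff : (n + q) • θ - x = (n + (q - f x)) • θ := by
    rw [sub_eq_iff_eq_add]
    nth_rw 2 [← hf x hx]
    rw [← add_smul]
    congr 1
    omega
  rw [Metric.mem_ball, dist_eq_norm, hdiff, pi_norm_lt_iff hδ] at hdist
  exact hdist j

theorem infinite (hS : IsFiniteRankBohr0 S) : S.Infinite :=
  Set.infinite_of_forall_exists_gt fun n => by
    obtain ⟨q, hq⟩ := hS.exists_syndetic_gap
    obtain ⟨k, -, hk⟩ := hq (n + 1)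
    exact ⟨_, hk, by omega⟩

theorem exists_lower_density (hS : IsFiniteRankBohr0 S) :
    ∃ c : ℝ, 0 < c ∧ ∀ᶠ l : ℕ in atTop, ∀ M,
      c * l ≤ ∑ n ∈ Finset.range l, S.indicator (1 : ℕ → ℝ) (M + n) := by
  obtain ⟨q, hq⟩ := hS.exists_syndetic_gap
  have hwindow (n : ℕ) : 1 ≤ ∑ k ∈ Finset.range (q + 1), S.indicator (1 : ℕ → ℝ) (n + k) := by
    obtain ⟨k, hk, hmem⟩ := hq n
    refine le_trans ?_ (Finset.single_le_sum (fun k _ => Set.indicator_nonneg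
      (fun _ _ => zero_le_one) (n + k)) (Finset.mem_range_succ_iff.2 hk))
    simp [hmem]
  have hshift : UniformMeanLE (fun n => ∑ k ∈ Finset.range (q + 1),
      (S.indicator (1 : ℕ → ℝ) n - S.indicator 1 (n + k))) (1 / 2) :=
    uniformMeanZero_sum (fun k _ => uniformMeanZero_sub_shift (B := 1) (fun n =>
      (norm_indicator_le_norm_self _ _).trans (by simp)) k) _ one_half_pos
  refine ⟨1 / (2 * (q + 1)), by positivity, ?_⟩
  filter_upwards [hshift] with l hl M
  have hlower := (abs_le.1 (hl M)).1
  simp only [Finset.sum_sub_distrib, Finset.sum_const, Finset.card_range, nsmul_eq_mul,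
    ← Finset.mul_sum] at hlower
  have hcover : (l : ℝ) ≤ ∑ n ∈ Finset.range l, ∑ k ∈ Finset.range (q + 1),
      S.indicator (1 : ℕ → ℝ) (M + n + k) := by
    simpa using Finset.card_nsmul_le_sum (Finset.range l) _ 1 fun n _ => hwindow (M + n)
  rw [div_mul_eq_mul_div, div_le_iff₀ (by positivity)]
  push_cast at hlower
  linarith

theorem infinite_setOf_uniformMeanLE_indicator_shift_sub (hS : IsFiniteRankBohr0 S) {ε : ℝ}
    (hε : 0 < ε) :
    {h | UniformMeanLE (fun n =>
      ‖S.indicator (1 : ℕ → ℝ) (n + h) - S.indicator 1 n‖) ε}.Infinite := by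
  obtain ⟨r, θ, δ, -, rfl⟩ := hS
  choose κ hκ hmean using fun j =>
    exists_uniformMeanLE_indicator_shift_sub (θ j) δ (ε := ε / (r + 1)) (by positivity)
  obtain ⟨κ₀, hκ₀, hpos⟩ := ((eventually_all.2 fun j => Iio_mem_nhds (hκ j)).filter_mono
    nhdsWithin_le_nhds |>.and (self_mem_nhdsWithin (s := Set.Ioi (0 : ℝ)))).exists
  have hT : IsFiniteRankBohr0 {h : ℕ | ∀ j, ‖h • θ j‖ < κ₀} := ⟨r, θ, κ₀, hpos, rfl⟩
  refine hT.infinite.mono fun h hh => ?_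
  have hsum := uniformMeanLE_sum (s := Finset.univ) fun j _ => hmean j h ((hh j).trans (hκ₀ j))
  rw [Set.mem_ofPred_eq]
  refine (hsum.mono ?_).of_norm_le fun n => ?_
  · rw [Finset.sum_const, Finset.card_univ, Fintype.card_fin, nsmul_eq_mul, mul_div_left_comm]
    exact mul_le_of_le_one_right hε.le ((div_le_one (by positivity)).2 (by linarith))
  · rw [norm_norm, Set.ofPred_forall fun j n => ‖n • θ j‖ < δ]
    exact norm_indicator_iInter_sub_le _ _ _

theorem uniformMeanZero_indicator_mul_sq_smul (hS : IsFiniteRankBohr0 S) {α : UnitAddCircle}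
    (hα : ¬IsOfFinAddOrder α) (g : C(UnitAddCircle, ℝ)) :
    UniformMeanZero fun n => S.indicator (1 : ℕ → ℝ) n * (g (n ^ 2 • α) - ∫ y, g y) := by
  rw [← uniformMeanZero_ofReal_iff]
  have h := uniformMeanZero_mul_sq_smul (w := fun n => ((S.indicator (1 : ℕ → ℝ) n : ℝ) : ℂ))
    (fun n => ?_) (fun ε hε => ?_) hα ⟨fun y => (g y : ℂ), by fun_prop⟩
  · simpa [integral_complex_ofReal] using h
  · rw [Complex.norm_real]
    exact (norm_indicator_le_norm_self _ _).trans (by simp)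
  · simpa only [← Complex.ofReal_sub, Complex.norm_real] using
      hS.infinite_setOf_uniformMeanLE_indicator_shift_sub hε

end IsFiniteRankBohr0

end BohrSet

section LimsupAverage

/-- The limsup as `N - M → ∞` of the averages of `f` over `S ∩ [M, N)` is at least `c`: for every
`ε > 0`, the average exceeds `c - ε` on arbitrarily long intervals `[M, N)`. -/
def LimsupAverageGE (S : Set ℕ) (f : ℕ → ℝ) (c : ℝ) : Prop :=
  ∀ ε : ℝ, 0 < ε → ∀ L : ℕ, ∃ M N : ℕ, M < N ∧ N - M > L ∧ (S ∩ Set.Ico M N).Nonempty ∧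
    (∑ᶠ n ∈ S ∩ Set.Ico M N, f n) / ((S ∩ Set.Ico M N).ncard : ℝ) > c - ε

theorem finsum_mem_inter_Ico (S : Set ℕ) (f : ℕ → ℝ) (M N : ℕ) :
    ∑ᶠ n ∈ S ∩ Set.Ico M N, f n =
      ∑ n ∈ Finset.range (N - M), S.indicator 1 (M + n) * f (M + n) := by
  classical
  have hcoe : S ∩ Set.Ico M N = ((Finset.Ico M N).filter (· ∈ S) : Finset ℕ) := by
    ext n
    simp [and_comm]
  rw [hcoe, finsum_mem_coe_finset, Finset.sum_filter, Finset.sum_Ico_eq_sum_range]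
  simp [Set.indicator_apply]

theorem ncard_inter_Ico (S : Set ℕ) (M N : ℕ) :
    ((S ∩ Set.Ico M N).ncard : ℝ) =
      ∑ n ∈ Finset.range (N - M), S.indicator (1 : ℕ → ℝ) (M + n) := by
  have hfin : (S ∩ Set.Ico M N).Finite := (Set.finite_Ico M N).inter_of_right S
  have hone := finsum_mem_inter_Ico S (fun _ => 1) M N
  rw [finsum_mem_eq_finite_toFinset_sum _ hfin] at hone
  simpa [← Set.ncard_eq_toFinset_card _ hfin] using hone

namespace LimsupAverageGE

variable {S : Set ℕ} {f g : ℕ → ℝ} {c : ℝ}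

theorem mono (h : LimsupAverageGE S f c) (hfg : ∀ n, f n ≤ g n) : LimsupAverageGE S g c := by
  intro ε hε L
  obtain ⟨M, N, hMN, hL, hne, hlt⟩ := h ε hε L
  refine ⟨M, N, hMN, hL, hne, hlt.trans_le ?_⟩
  rw [finsum_mem_inter_Ico, finsum_mem_inter_Ico]
  gcongr with n
  · exact Set.indicator_nonneg (fun _ _ => zero_le_one) _
  · exact hfg _

theorem le_of_isFiniteRankBohr0 {b : ℝ} (h : LimsupAverageGE S f c)
    (hS : IsFiniteRankBohr0 S) (hfg : ∀ n ≠ 0, f n ≤ g n)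
    (hg : UniformMeanZero fun n => S.indicator (1 : ℕ → ℝ) n * (g n - b)) : c ≤ b := by
  set e : ℕ → ℝ := Pi.single 0 |f 0 - g 0| with he
  have hfe (n : ℕ) : f n ≤ g n + e n := by
    rcases eq_or_ne n 0 with rfl | hn
    · simpa [he] using (sub_le_iff_le_add'.1 (le_abs_self _) : f 0 ≤ g 0 + _)
    · simpa [he, hn] using hfg n hn
  have he_mean : UniformMeanZero fun n => S.indicator (1 : ℕ → ℝ) n * e n := by
    have hbound (n : ℕ) : ‖S.indicator (1 : ℕ → ℝ) n * e n‖ ≤ |f 0 - g 0| := by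
      rcases eq_or_ne n 0 with rfl | hn
      · by_cases h0 : 0 ∈ S <;> simp [he, h0]
      · simp [he, hn]
    simpa [he] using uniformMeanZero_sub_shift hbound 1
  obtain ⟨κ, hκ, hdense⟩ := hS.exists_lower_density
  refine le_of_forall_pos_le_add fun ε hε => ?_
  obtain ⟨l₀, hl₀⟩ := eventually_atTop.1 (hdense.and ((hg.add he_mean) (ε / 2 * κ) (by positivity)))
  obtain ⟨M, N, -, hL, hne, hlt⟩ := h.mono hfe (ε / 2) (half_pos hε) l₀
  obtain ⟨hlower, hmean⟩ := hl₀ (N - M) hL.le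
  have hpos : (0 : ℝ) < (S ∩ Set.Ico M N).ncard := by
    exact_mod_cast (Set.ncard_pos ((Set.finite_Ico M N).inter_of_right S)).2 hne
  have hsum := (abs_le.1 (hmean M)).2
  simp only [← mul_add, sub_add_eq_add_sub] at hsum
  simp only [mul_sub, Finset.sum_sub_distrib, ← finsum_mem_inter_Ico S (fun n => g n + e n),
    ← Finset.sum_mul, ← ncard_inter_Ico] at hsum
  have hlower' := hlower M
  rw [← ncard_inter_Ico] at hlower'
  rw [gt_iff_lt, lt_div_iff₀ hpos] at hlt
  refine le_of_mul_le_mul_right (a := ((S ∩ Set.Ico M N).ncard : ℝ)) ?_ hpos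
  nlinarith

end LimsupAverageGE

end LimsupAverage

section ClosedSections

theorem exists_continuousMap_indicator_le_integral_le {Y : Type*} [TopologicalSpace Y]
    [NormalSpace Y] [MeasurableSpace Y] [BorelSpace Y] (μ : Measure Y) [IsFiniteMeasure μ]
    [μ.OuterRegular] {F : Set Y} (hF : IsClosed F) {ε : ℝ} (hε : 0 < ε) :
    ∃ Ψ : C(Y, ℝ), (∀ y, F.indicator 1 y ≤ Ψ y) ∧ ∫ y, Ψ y ∂μ ≤ μ.real F + ε := by
  obtain ⟨U, hFU, hU, hμU⟩ := F.exists_isOpen_le_add μ (ENNReal.ofReal_pos.2 hε).ne'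
  obtain ⟨Ψ, hΨ0, hΨ1, hΨ⟩ := exists_continuous_zero_one_of_isClosed hU.isClosed_compl hF
    (Set.disjoint_compl_left_iff_subset.2 hFU)
  refine ⟨Ψ, Set.indicator_le' (fun y hy => (hΨ1 hy).ge) fun y _ => (hΨ y).1, ?_⟩
  calc ∫ y, Ψ y ∂μ ≤ ∫ y, U.indicator 1 y ∂μ := by
        refine integral_mono_of_nonneg (.of_forall fun y => (hΨ y).1)
          ((integrable_const 1).indicator hU.measurableSet) (.of_forall fun y => ?_)
        exact Set.le_indicator (fun y _ => (hΨ y).2) (fun y hy => (hΨ0 hy).le) y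
    _ = μ.real U := integral_indicator_one hU.measurableSet
    _ ≤ (μ F + ENNReal.ofReal ε).toReal := ENNReal.toReal_mono (by finiteness) hμU
    _ = μ.real F + ε := by
        rw [ENNReal.toReal_add (by finiteness) (by finiteness), ENNReal.toReal_ofReal hε.le]
        rfl

theorem LimsupAverageGE.le_measureReal_prod {Z : Type*} [TopologicalSpace Z] [CompactSpace Z]
    [TopologicalSpace.PseudoMetrizableSpace Z] [MeasurableSpace Z] [BorelSpace Z] {ν : Measure Z}
    [IsProbabilityMeasure ν] {F : Set (UnitAddCircle × Z)} (hF : IsClosed F)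
    {α : UnitAddCircle} (hα : ¬IsOfFinAddOrder α) {S : Set ℕ} (hS : IsFiniteRankBohr0 S)
    {f : ℕ → ℝ} {c : ℝ} (h : LimsupAverageGE S f c)
    (hf : ∀ n ≠ 0, f n ≤ ν.real (Prod.mk (n ^ 2 • α) ⁻¹' F)) :
    c ≤ (volume.prod ν).real F := by
  refine le_of_forall_pos_le_add fun ε hε => ?_
  obtain ⟨Ψ, hFΨ, hΨ⟩ := exists_continuousMap_indicator_le_integral_le (volume.prod ν) hF hε
  let G : C(UnitAddCircle, ℝ) :=
    ⟨fun t => ∫ z, Ψ (t, z) ∂ν, by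
      simpa using continuous_parametric_integral_of_continuous (μ := ν) (s := Set.univ)
        (f := fun t z => Ψ (t, z)) (by fun_prop) isCompact_univ⟩
  refine le_trans ?_ hΨ
  rw [integral_prod _ (Ψ.continuous.integrable_of_hasCompactSupport (.of_compactSpace _))]
  refine h.le_of_isFiniteRankBohr0 hS (fun n hn => (hf n hn).trans ?_)
    (hS.uniformMeanZero_indicator_mul_sq_smul hα G)
  have hsection : IsClosed (Prod.mk (n ^ 2 • α) ⁻¹' F) := hF.preimage (by fun_prop)
  rw [← integral_indicator_one hsection.measurableSet]
  exact integral_mono ((integrable_const 1).indicator hsection.measurableSet)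
    ((Ψ.continuous.comp (.prodMk_right _)).integrable_of_hasCompactSupport (.of_compactSpace _))
    fun z => hFΨ (n ^ 2 • α, z)

end ClosedSections

section Torus

theorem exists_forall_sum_smul_eq_of_det_ne_zero {ι G : Type*} [Fintype ι] [DecidableEq ι]
    [AddCommGroup G] [DivisibleBy G ℤ] {A : Matrix ι ι ℤ} (hA : A.det ≠ 0) (w : ι → G) :
    ∃ z : ι → G, ∀ i, ∑ j, A i j • z j = w i := by
  refine ⟨fun j => ∑ l, A.adjugate j l • DivisibleBy.div (w l) A.det, fun i => ?_⟩
  calc ∑ j, A i j • ∑ l, A.adjugate j l • DivisibleBy.div (w l) A.det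
      = ∑ l, (A * A.adjugate) i l • DivisibleBy.div (w l) A.det := by
        simp only [Finset.smul_sum, smul_smul, Matrix.mul_apply, Finset.sum_smul]
        exact Finset.sum_comm
    _ = A.det • DivisibleBy.div (w i) A.det := by
        simp [Matrix.mul_adjugate, Matrix.one_apply]
    _ = w i := DivisibleBy.div_cancel _ hA

theorem measurePreserving_sum_zsmul {ι : Type*} [Fintype ι] [DecidableEq ι] {A : Matrix ι ι ℤ}
    (hA : A.det ≠ 0) :
    MeasurePreserving (fun (z : UnitAddTorus ι) (i : ι) => ∑ j, A i j • z j) := by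
  let f : UnitAddTorus ι →+ UnitAddTorus ι :=
    { toFun z i := ∑ j, A i j • z j
      map_zero' := by ext; simp
      map_add' z w := by ext; simp [Finset.sum_add_distrib] }
  refine AddMonoidHom.measurePreserving (f := f) ?_ (fun w => ?_) rfl
  · exact continuous_pi fun i => continuous_finsetSum _ fun j _ => by fun_prop
  · exact (exists_forall_sum_smul_eq_of_det_ne_zero hA w).imp fun z hz => funext hz

theorem haarAddCircle_eq_volume : (AddCircle.haarAddCircle : Measure UnitAddCircle) = volume := by
  simp [AddCircle.volume_eq_smul_haarAddCircle]

open UnitAddTorus in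
theorem hasSum_sq_norm_setIntegral_mFourier {ι : Type*} [Fintype ι] {s : Set (UnitAddTorus ι)}
    (hs : MeasurableSet s) :
    HasSum (fun n : ι → ℤ => ‖∫ z in s, mFourier n z‖ ^ 2) (volume.real s) := by
  let f := indicatorConstLp (μ := (volume : Measure (UnitAddTorus ι))) 2 hs (by finiteness) (1 : ℂ)
  have hf : f =ᵐ[volume] s.indicator 1 := indicatorConstLp_coeFn
  have parseval : HasSum (fun n : ι → ℤ => ‖∫ z, mFourier (-n) z • f z‖ ^ 2) (∫ z, ‖f z‖ ^ 2) := by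
    have hvol : (volume : Measure (UnitAddTorus ι)) =
        Measure.pi fun _ => AddCircle.haarAddCircle := by
      rw [haarAddCircle_eq_volume, volume_pi]
    clear_value f
    revert f
    rw [hvol]
    exact fun f _ => hasSum_sq_mFourierCoeff f
  rw [← (Equiv.neg (ι → ℤ)).hasSum_iff]
  convert parseval using 1
  · refine funext fun n => ?_
    simp only [Function.comp_apply, Equiv.neg_apply]
    rw [← integral_indicator hs]
    congr 2
    refine integral_congr_ae (hf.mono fun z hz => ?_)
    by_cases hzs : z ∈ s <;> simp [hz, hzs]
  · rw [← integral_indicator_one hs]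
    refine integral_congr_ae (hf.mono fun z hz => ?_)
    by_cases hzs : z ∈ s <;> simp [hz, hzs]

open UnitAddTorus in
theorem eventuallyConst_ae_of_setIntegral_mFourier_eq_zero {ι : Type*} [Fintype ι]
    {s : Set (UnitAddTorus ι)} (hs : MeasurableSet s)
    (h : ∀ n ≠ 0, ∫ z in s, mFourier n z = 0) : EventuallyConst s (ae volume) := by
  have hsq : volume.real s = volume.real s ^ 2 := by
    simpa [mFourier_zero] using (hasSum_sq_norm_setIntegral_mFourier hs).unique
      (hasSum_single 0 fun n hn => by simp [h n hn])
  rw [eventuallyConst_set']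
  rcases eq_or_ne (volume.real s) 0 with h0 | h0
  · exact .inl (ae_eq_empty.2 ((measureReal_eq_zero_iff).1 h0))
  · have h1 : volume.real s = 1 := mul_left_cancel₀ h0 (by rw [← sq, ← hsq, mul_one])
    refine .inr ?_
    rwa [ae_eq_univ, prob_compl_eq_zero_iff hs, ← ENNReal.toReal_eq_one_iff]

end Torus

section SkewShift

/-- The affine skew product `(x, y) ↦ (x + α, y + 2x + α)` of the two-dimensional torus; its
iterates move `y` along the squares `n² α`. -/
def skewShift (α : UnitAddCircle) (z : UnitAddTorus (Fin 2)) : UnitAddTorus (Fin 2) :=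
  ![z 0 + α, z 1 + 2 • z 0 + α]

namespace skewShift

variable {α : UnitAddCircle}

theorem iterate_eq (α : UnitAddCircle) (n : ℕ) (z : UnitAddTorus (Fin 2)) :
    (skewShift α)^[n] z = ![z 0 + n • α, z 1 + (2 * n) • z 0 + n ^ 2 • α] := by
  induction n with
  | zero => ext i; fin_cases i <;> simp
  | succ n ih =>
    rw [Function.iterate_succ_apply', ih]
    ext i
    fin_cases i <;> simp only [skewShift, Fin.zero_eta, Fin.mk_one, Matrix.cons_val] <;> module

theorem measurePreserving (α : UnitAddCircle) : MeasurePreserving (skewShift α) := by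
  have linear := measurePreserving_sum_zsmul (A := !![1, 0; 2, 1]) (by simp)
  have affine : skewShift α =
      (· + fun _ => α) ∘ fun z i => ∑ j, (!![1, 0; 2, 1] : Matrix _ _ ℤ) i j • z j := by
    refine funext fun z => funext fun i => ?_
    fin_cases i
    · simp [skewShift]
    · simp [skewShift, add_comm (z 1), ofNat_zsmul]
  rw [affine]
  exact (measurePreserving_add_right volume _).comp linear

theorem mFourier_apply (α : UnitAddCircle) (n : Fin 2 → ℤ) (z : UnitAddTorus (Fin 2)) :
    UnitAddTorus.mFourier n (skewShift α z) =
      fourier (n 0 + n 1) α * UnitAddTorus.mFourier ![n 0 + 2 * n 1, n 1] z := by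
  simp only [UnitAddTorus.mFourier, ContinuousMap.coe_mk, Fin.prod_univ_two, skewShift,
    Matrix.cons_val_zero, Matrix.cons_val_one, fourier_apply, ← Circle.coe_mul,
    ← AddCircle.toCircle_add]
  congr 2
  module

open UnitAddTorus in
theorem setIntegral_mFourier {s : Set (UnitAddTorus (Fin 2))} (hs : MeasurableSet s)
    (hinv : skewShift α ⁻¹' s = s) (n : Fin 2 → ℤ) :
    ∫ z in s, mFourier n z =
      fourier (n 0 + n 1) α * ∫ z in s, mFourier ![n 0 + 2 * n 1, n 1] z := by
  have hT := skewShift.measurePreserving α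
  calc ∫ z in s, mFourier n z = ∫ z in skewShift α ⁻¹' s, mFourier n (skewShift α z) := by
        rw [← setIntegral_map hs (by fun_prop) hT.aemeasurable, hT.map_eq]
    _ = _ := by simp only [hinv, skewShift.mFourier_apply, integral_const_mul]

theorem norm_setIntegral_mFourier {s : Set (UnitAddTorus (Fin 2))} (hs : MeasurableSet s)
    (hinv : skewShift α ⁻¹' s = s) (n : Fin 2 → ℤ) (k : ℕ) :
    ‖∫ z in s, UnitAddTorus.mFourier ![n 0 + 2 * k * n 1, n 1] z‖ =
      ‖∫ z in s, UnitAddTorus.mFourier n z‖ := by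
  induction k with
  | zero =>
    congr! 5
    ext i
    fin_cases i <;> simp
  | succ k ih =>
    rw [← ih, setIntegral_mFourier hs hinv ![n 0 + 2 * k * n 1, n 1], norm_mul, fourier_apply,
      Circle.norm_coe, one_mul]
    congr! 5
    ext i
    fin_cases i
    · simp only [Matrix.cons_val, Fin.zero_eta]
      push_cast
      ring
    · rfl

open UnitAddTorus in
-- The frequencies `(n₀ + 2kn₁, n₁)` carry coefficients of equal modulus, which is compatible with
-- Parseval only if `n₁ = 0`; in that case the coefficient is an eigenvector for `α`.
theorem ergodic (hα : ¬IsOfFinAddOrder α) : Ergodic (skewShift α) := by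
  refine ⟨skewShift.measurePreserving α, ⟨fun s hs hinv => ?_⟩⟩
  refine eventuallyConst_ae_of_setIntegral_mFourier_eq_zero hs fun n hn => ?_
  rcases eq_or_ne (n 1) 0 with h1 | h1
  · have h0 : n 0 ≠ 0 := fun h0 => hn (by ext i; fin_cases i <;> assumption)
    have fixed : ![n 0 + 2 * n 1, n 1] = n := by ext i; fin_cases i <;> simp [h1]
    have eigen := setIntegral_mFourier hs hinv n
    rw [fixed, h1, add_zero] at eigen
    by_contra hne
    refine coe_toCircle_ne_one (fun h => hα (isOfFinAddOrder_iff_zsmul_eq_zero.2 ⟨n 0, h0, h⟩)) ?_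
    exact mul_right_cancel₀ hne (by rw [one_mul, ← fourier_apply, ← eigen])
  · have hinj : Function.Injective fun k : ℕ => ![n 0 + 2 * k * n 1, n 1] := fun k l hkl => by
      simpa [h1] using congrFun hkl 0
    have summable := (hasSum_sq_norm_setIntegral_mFourier hs).summable.comp_injective hinj
    simp only [Function.comp_def, norm_setIntegral_mFourier hs hinv n, summable_const_iff]
      at summable
    simpa using summable

end skewShift

end SkewShift

section PolynomialEvaluation

/-- The value at `x` of the polynomial `c 0 + c 1 X + ⋯ + c (k - 1) X ^ (k - 1)` with coefficients
in an abelian group. -/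
def polyEval {k : ℕ} {G : Type*} [AddCommGroup G] (c : Fin k → G) (x : ℕ) : G :=
  ∑ j : Fin k, x ^ (j : ℕ) • c j

theorem polyEval_snoc {k : ℕ} {G : Type*} [AddCommGroup G] (c : Fin k → G) (t : G) (x : ℕ) :
    polyEval (Fin.snoc c t : Fin (k + 1) → G) x = polyEval c x + x ^ k • t := by
  simp [polyEval, Fin.sum_univ_castSucc]

theorem sum_zsmul_polyEval_eq_zero {k d : ℕ} {G : Type*} [AddCommGroup G] {a : Fin d → ℕ}
    {φ : Fin d → ℤ} (hφ : ∀ j : Fin k, ∑ i, φ i * (a i : ℤ) ^ (j : ℕ) = 0) (c : Fin k → G) :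
    ∑ i, φ i • polyEval c (a i) = 0 := by
  calc ∑ i, φ i • polyEval c (a i) = ∑ j : Fin k, (∑ i, φ i * (a i : ℤ) ^ (j : ℕ)) • c j := by
        simp only [polyEval, Finset.smul_sum, Finset.sum_smul, mul_smul, ← Nat.cast_pow,
          natCast_zsmul]
        exact Finset.sum_comm
    _ = 0 := by simp [hφ]

@[fun_prop]
theorem continuous_polyEval {k : ℕ} (x : ℕ) :
    Continuous fun c : UnitAddTorus (Fin k) => polyEval c x :=
  continuous_finsetSum Finset.univ fun _ _ => by fun_prop

theorem measurePreserving_polyEval {k : ℕ} {b : Fin k → ℕ} (hb : Function.Injective b) :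
    MeasurePreserving fun (c : UnitAddTorus (Fin k)) (i : Fin k) => polyEval c (b i) := by
  convert measurePreserving_sum_zsmul (A := Matrix.vandermonde fun i => (b i : ℤ))
    (Matrix.det_vandermonde_ne_zero_iff.2 (Nat.cast_injective.comp hb)) using 1
  ext c i
  simp only [polyEval, Matrix.vandermonde_apply, ← Nat.cast_pow, natCast_zsmul]

end PolynomialEvaluation

/-- Every closed set `A` of positive measure contains the values at `a 0, …, a (d - 1)` of at least
a proportion `C μ(A) ^ ℓ` of the polynomials with `k` coefficients in the circle. -/
def CircleAbundance (k : ℕ) {d : ℕ} (a : Fin d → ℕ) (C ℓ : ℝ) : Prop :=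
  ∀ A : Set UnitAddCircle, IsClosed A → 0 < volume A →
    C * volume.real A ^ ℓ ≤ volume.real {c : UnitAddTorus (Fin k) | ∀ i, polyEval c (a i) ∈ A}

/-- The system `(X, μ, T)` has large intersections along Bohr sets: every set `A` of positive
measure admits a finite-rank Bohr₀ set along which the averages of the measures of
`⋂ i, T ^ (-a i * n) A` have upper limit at least `C μ(A) ^ ℓ`. -/
def BohrRecurrenceBound {d : ℕ} (a : Fin d → ℕ) (C ℓ : ℝ) {X : Type*} [MeasurableSpace X]
    (μ : Measure X) (T : X → X) : Prop :=
  ∀ A : Set X, MeasurableSet A → 0 < μ A → ∃ S, IsFiniteRankBohr0 S ∧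
    LimsupAverageGE S (fun n => μ.real (⋂ i, T^[a i * n] ⁻¹' A)) (C * μ.real A ^ ℓ)

section SkewShiftRecurrence

variable {d : ℕ} {α : UnitAddCircle} {A : Set UnitAddCircle}

theorem isClosed_setOf_forall_polyEval_mem {k : ℕ} (a : Fin d → ℕ) (hA : IsClosed A) :
    IsClosed {c : UnitAddTorus (Fin k) | ∀ i, polyEval c (a i) ∈ A} := by
  rw [Set.ofPred_forall]
  exact isClosed_iInter fun i => hA.preimage (by fun_prop)

theorem measurePreserving_snoc (X : Type*) [MeasureSpace X] [SigmaFinite (volume : Measure X)]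
    (n : ℕ) :
    MeasurePreserving fun p : X × (Fin n → X) => (Fin.snoc p.2 p.1 : Fin (n + 1) → X) := by
  convert (volume_preserving_piFinSuccAbove (fun _ : Fin (n + 1) => X) (Fin.last n)).symm using 1
  ext p : 1
  exact (Fin.insertNth_last' _ _).symm

theorem skewShift.measureReal_iInter_iterate_preimage (a : Fin d → ℕ) (hA : IsClosed A) {n : ℕ}
    (hn : n ≠ 0) :
    volume.real (⋂ i, (skewShift α)^[a i * n] ⁻¹' (Function.eval 1 ⁻¹' A)) =
      volume.real {z : UnitAddTorus (Fin 2) |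
        ∀ i, polyEval (Fin.snoc z (n ^ 2 • α) : Fin 3 → UnitAddCircle) (a i) ∈ A} := by
  have hswap := measurePreserving_sum_zsmul (A := !![0, 1; 2 * n, 0]) (by simp [hn])
  have hclosed : IsClosed {z : UnitAddTorus (Fin 2) |
      ∀ i, polyEval (Fin.snoc z (n ^ 2 • α) : Fin 3 → UnitAddCircle) (a i) ∈ A} :=
    (isClosed_setOf_forall_polyEval_mem a hA).preimage (by fun_prop)
  rw [← hswap.measureReal_preimage hclosed.measurableSet.nullMeasurableSet]
  congr 1
  ext z
  simp only [Set.mem_iInter, Set.mem_preimage, Set.mem_ofPred_eq, skewShift.iterate_eq,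
    polyEval_snoc]
  refine forall_congr' fun i => ?_
  convert Iff.rfl using 2
  simp only [polyEval, Fin.sum_univ_two, Matrix.of_apply, Matrix.cons_val, Fin.val_zero,
    Fin.val_one, pow_zero, pow_one]
  module

theorem skewShift.circleAbundance {a : Fin d → ℕ} {C ℓ : ℝ} (hα : ¬IsOfFinAddOrder α)
    (h : BohrRecurrenceBound a C ℓ volume (skewShift α)) : CircleAbundance 3 a C ℓ := by
  intro A hA hpos
  have heval : MeasurePreserving (Function.eval 1 : UnitAddTorus (Fin 2) → UnitAddCircle) :=
    measurePreserving_eval _ 1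
  obtain ⟨S, hS, hlimsup⟩ := h (Function.eval 1 ⁻¹' A) (heval.measurable hA.measurableSet)
    (by rwa [heval.measure_preimage hA.measurableSet.nullMeasurableSet])
  rw [heval.measureReal_preimage hA.measurableSet.nullMeasurableSet] at hlimsup
  have hF := isClosed_setOf_forall_polyEval_mem (k := 3) a hA
  rw [← (measurePreserving_snoc UnitAddCircle 2).measureReal_preimage
    hF.measurableSet.nullMeasurableSet]
  refine hlimsup.le_measureReal_prod (hF.preimage (by fun_prop)) hα hS fun n hn => ?_
  exact (skewShift.measureReal_iInter_iterate_preimage a hA hn).le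

end SkewShiftRecurrence

section IntegerForms

theorem exists_int_forms_mem_iff {ι : Type*} [Fintype ι] (V : Submodule ℚ (ι → ℚ)) :
    ∃ (r : ℕ) (φ : Fin r → ι → ℤ), ∀ v, v ∈ V ↔ ∀ s, ∑ i, (φ s i : ℚ) * v i = 0 := by
  classical
  let b := Module.finBasis ℚ ((ι → ℚ) ⧸ V)
  let coord (s : Fin _) (i : ι) : ℚ := b.repr (V.mkQ (Pi.single i 1)) s
  have clear_denominators (s : Fin _) :
      ∃ (D : ℤ) (ψ : ι → ℤ), D ≠ 0 ∧ ∀ i, (ψ i : ℚ) = D * coord s i := by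
    obtain ⟨D, hD⟩ := IsLocalization.exist_integer_multiples_of_finite (nonZeroDivisors ℤ) (coord s)
    choose ψ hψ using hD
    exact ⟨D, ψ, nonZeroDivisors.coe_ne_zero D, fun i => by simpa [zsmul_eq_mul] using hψ i⟩
  choose D φ hD hφ using clear_denominators
  refine ⟨_, φ, fun v => ?_⟩
  have coord_mkQ (s : Fin _) : b.repr (V.mkQ v) s = ∑ i, coord s i * v i := by
    conv_lhs => rw [pi_eq_sum_univ' v]
    simp [coord, mul_comm, Finsupp.finsetSum_apply]
  calc v ∈ V ↔ V.mkQ v = 0 := by simp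
    _ ↔ ∀ s, ∑ i, coord s i * v i = 0 := by
        simp_rw [← coord_mkQ, ← b.repr.map_eq_zero_iff, DFunLike.ext_iff, Finsupp.zero_apply]
    _ ↔ ∀ s, ∑ i, (φ s i : ℚ) * v i = 0 := by
        simp [hφ, mul_assoc, ← Finset.mul_sum, hD]

end IntegerForms

section PowerSpan

/-- The span of the vectors `(a 0 ^ i, …, a (d - 1) ^ i)`, `i < k`: the values at the points `a` of
the rational polynomials with `k` coefficients. -/
def powerSpan (k : ℕ) {d : ℕ} (a : Fin d → ℕ) : Submodule ℚ (Fin d → ℚ) :=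
  Submodule.span ℚ (Set.range fun i : Fin k => fun j : Fin d => ((a j : ℚ) ^ (i : ℕ)))

variable {k d : ℕ} {a : Fin d → ℕ}

theorem eq_zero_of_mem_powerSpan (ha : Function.Injective a) (hkd : k ≤ d) {v : Fin d → ℚ}
    (hv : v ∈ powerSpan k a) (h : ∀ i : Fin k, v (Fin.castLE hkd i) = 0) : v = 0 := by
  obtain ⟨w, rfl⟩ := (Submodule.mem_span_range_iff_exists_fun ℚ).1 hv
  have hw : w = 0 := by
    refine Matrix.eq_zero_of_forall_index_sum_pow_mul_eq_zero
      (f := fun i : Fin k => (a (Fin.castLE hkd i) : ℚ))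
      (Nat.cast_injective.comp (ha.comp (Fin.castLE_injective hkd))) fun i => ?_
    simpa [mul_comm] using h i
  simp [hw]

theorem finite_setOf_forall_lt {κ : Type*} [Finite κ] {m N : ℕ} :
    {q : κ → Fin m → ℕ | ∀ i j, q i j < N}.Finite := by
  simpa [Set.pi] using Set.Finite.pi' fun _ => Set.Finite.pi' fun _ => Set.finite_Iio N

theorem ncard_setOf_forall_lt (m N : ℕ) :
    {q : Fin k → Fin m → ℕ | ∀ i j, q i j < N}.ncard = (N ^ m) ^ k := by
  have hcoe : {q : Fin k → Fin m → ℕ | ∀ i j, q i j < N} =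
      Fintype.piFinset fun _ : Fin k => Fintype.piFinset fun _ : Fin m => Finset.range N := by
    ext q
    simp
  rw [hcoe, Set.ncard_coe_finset]
  simp

theorem ncard_inVm_powerSpan_le (ha : Function.Injective a) (hkd : k ≤ d) (m N : ℕ) :
    {q : Fin d → Fin m → ℕ | (∀ i j, q i j < N) ∧ inVm (powerSpan k a) q}.ncard ≤
      (N ^ m) ^ k := by
  rw [← ncard_setOf_forall_lt]
  refine Set.ncard_le_ncard_of_injOn (fun q i => q (Fin.castLE hkd i)) (fun q hq i j => hq.1 _ j)
    ?_ finite_setOf_forall_lt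
  intro q hq q' hq' heq
  ext i j
  have hdiff := eq_zero_of_mem_powerSpan ha hkd (Submodule.sub_mem _ (hq.2 j) (hq'.2 j)) fun i => by
    simpa [sub_eq_zero] using congrFun (congrFun heq i) j
  simpa [sub_eq_zero] using congrFun hdiff i

theorem ncard_inVm_pos (V : Submodule ℚ (Fin d → ℚ)) {m N : ℕ} (hN : 0 < N) :
    0 < {q : Fin d → Fin m → ℕ | (∀ i j, q i j < N) ∧ inVm V q}.ncard := by
  refine (Set.ncard_pos (finite_setOf_forall_lt.subset fun q hq => hq.1)).2
    ⟨0, fun _ _ => hN, fun _ => ?_⟩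
  convert V.zero_mem
  simp

theorem ncard_div_le_Dmn (ha : Function.Injective a) (hkd : k ≤ d) {m N : ℕ} (hN : 0 < N)
    (E : Set (Fin m → ℕ)) :
    {q : Fin d → Fin m → ℕ | (∀ i, q i ∈ E) ∧ inVm (powerSpan k a) q}.ncard / ((N : ℝ) ^ m) ^ k ≤
      Dmn (powerSpan k a) m N E := by
  have := ncard_inVm_pos (m := m) (powerSpan k a) hN
  rw [Dmn]
  gcongr
  exact_mod_cast ncard_inVm_powerSpan_le ha hkd m N

end PowerSpan

section Digits

theorem eq_zero_of_pow_dvd_sum_mul_pow {B m : ℕ} {f : Fin m → ℤ} (hf : ∀ j, |f j| < B)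
    (h : (B : ℤ) ^ m ∣ ∑ j, f j * (B : ℤ) ^ (j : ℕ)) (j : Fin m) : f j = 0 := by
  induction m with
  | zero => exact j.elim0
  | succ m ih =>
    have hB : (B : ℤ) ≠ 0 := ((abs_nonneg _).trans_lt (hf 0)).ne'
    have split : ∑ j, f j * (B : ℤ) ^ (j : ℕ) =
        f 0 + B * ∑ j : Fin m, f j.succ * (B : ℤ) ^ (j : ℕ) := by
      simp [Fin.sum_univ_succ, Finset.mul_sum, pow_succ', mul_left_comm]
    rw [split, pow_succ'] at h
    have h0 : f 0 = 0 := Int.eq_zero_of_abs_lt_dvd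
      ((Int.dvd_add_left (dvd_mul_right _ _)).1 (dvd_of_mul_right_dvd h)) (hf 0)
    rw [h0, zero_add] at h
    exact Fin.cases h0 (ih (fun j => hf j.succ) ((mul_dvd_mul_iff_left hB).1 h)) j

theorem dvd_of_norm_coe_div_lt {M : ℕ} (hM : 0 < M) {z : ℤ}
    (h : ‖((z / M : ℝ) : UnitAddCircle)‖ < 1 / M) : (M : ℤ) ∣ z := by
  have hM' : (0 : ℝ) < M := by exact_mod_cast hM
  rw [UnitAddCircle.norm_eq, lt_div_iff₀ hM', ← abs_of_pos hM', ← abs_mul, abs_of_pos hM',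
    sub_mul, div_mul_cancel₀ _ hM'.ne'] at h
  have hlt : |z - round (z / M : ℝ) * (M : ℤ)| < 1 := by exact_mod_cast h
  exact ⟨round (z / M : ℝ), by linarith [Int.abs_lt_one_iff.1 hlt]⟩

/-- The point `∑ j, e j * B ^ (j - m)` of the circle, whose base `B` expansion has the digits `e`,
the most significant one last. -/
noncomputable def digitPoint (B : ℕ) {m : ℕ} (e : Fin m → ℕ) : UnitAddCircle :=
  ((∑ j, e j * B ^ (j : ℕ) : ℕ) / (B ^ m : ℕ) : ℝ)

theorem sum_zsmul_digitPoint {κ : Type*} [Fintype κ] (B : ℕ) {m : ℕ} (φ : κ → ℤ)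
    (q : κ → Fin m → ℕ) :
    ∑ i, φ i • digitPoint B (q i) =
      ((∑ j, (∑ i, φ i * (q i j : ℤ)) * (B : ℤ) ^ (j : ℕ) : ℤ) / (B ^ m : ℕ) : ℝ) := by
  simp only [digitPoint, ← AddCircle.coe_zsmul]
  rw [← QuotientAddGroup.mk_sum]
  congr 1
  push_cast
  simp only [zsmul_eq_mul, ← mul_div_assoc, ← Finset.sum_div, Finset.mul_sum, Finset.sum_mul,
    mul_assoc]
  rw [Finset.sum_comm]

theorem sum_mul_eq_zero_of_norm_digitPoint_lt {κ : Type*} [Fintype κ] {B m : ℕ} (hB : 0 < B)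
    {φ : κ → ℤ} {q : κ → Fin m → ℕ} (hφ : ∀ j, |∑ i, φ i * (q i j : ℤ)| < B)
    (h : ‖∑ i, φ i • digitPoint B (q i)‖ < 1 / (B ^ m : ℕ)) (j : Fin m) :
    ∑ i, φ i * (q i j : ℤ) = 0 := by
  rw [sum_zsmul_digitPoint] at h
  exact eq_zero_of_pow_dvd_sum_mul_pow hφ
    (by exact_mod_cast dvd_of_norm_coe_div_lt (pow_pos hB m) h) j

theorem one_div_pow_le_norm_digitPoint_sub {B m : ℕ} {e e' : Fin m → ℕ} (he : ∀ j, e j < B)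
    (he' : ∀ j, e' j < B) (hne : e ≠ e') :
    1 / (B ^ m : ℕ) ≤ ‖digitPoint B e - digitPoint B e'‖ := by
  by_contra! h
  obtain ⟨j, hj⟩ := Function.ne_iff.1 hne
  refine hj ?_
  have hzero := sum_mul_eq_zero_of_norm_digitPoint_lt (φ := ![1, -1]) (q := ![e, e'])
    (pos_of_gt (he j)) (fun j => ?_) (by simpa [sub_eq_add_neg] using h) j
  · simp only [Fin.sum_univ_two, Matrix.cons_val] at hzero
    lia
  · simp only [Fin.sum_univ_two, Matrix.cons_val, abs_lt]
    have := he j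
    have := he' j
    lia

end Digits

section ConfigurationCounting

variable {k d : ℕ} {a : Fin d → ℕ}

theorem measureReal_biUnion_closedBall {ι : Type*} {P : Finset ι} {x : ι → UnitAddCircle} {ρ : ℝ}
    (hρ0 : 0 ≤ ρ) (hρ1 : 2 * ρ ≤ 1)
    (hsep : (P : Set ι).Pairwise fun e e' => 2 * ρ < ‖x e - x e'‖) :
    volume.real (⋃ e ∈ P, Metric.closedBall (x e) ρ) = P.card * (2 * ρ) := by
  have hdisj : (P : Set ι).PairwiseDisjoint fun e => Metric.closedBall (x e) ρ :=
    hsep.imp fun e e' h => Metric.closedBall_disjoint_closedBall (by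
      rw [dist_eq_norm]
      linarith)
  rw [measureReal_biUnion_finset hdisj fun e _ => Metric.isClosed_closedBall.measurableSet]
  simp [Measure.real, AddCircle.volume_closedBall, min_eq_right hρ1, hρ0]

theorem measureReal_polyEval_mem_closedBall_le (ha : Function.Injective a) (hkd : k ≤ d)
    (y : Fin d → UnitAddCircle) {ρ : ℝ} (hρ : 0 ≤ ρ) :
    volume.real {c : UnitAddTorus (Fin k) | ∀ i, polyEval c (a i) ∈ Metric.closedBall (y i) ρ} ≤
      (2 * ρ) ^ k := by
  have heval := measurePreserving_polyEval (ha.comp (Fin.castLE_injective hkd))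
  have hbox : MeasurableSet
      (Set.univ.pi fun i : Fin k => Metric.closedBall (y (Fin.castLE hkd i)) ρ) :=
    MeasurableSet.univ_pi fun i => Metric.isClosed_closedBall.measurableSet
  calc _ ≤ volume.real
          (Set.univ.pi fun i : Fin k => Metric.closedBall (y (Fin.castLE hkd i)) ρ) := by
        rw [← heval.measureReal_preimage hbox.nullMeasurableSet]
        exact measureReal_mono fun c hc i _ => hc _
    _ = ∏ i : Fin k, volume.real (Metric.closedBall (y (Fin.castLE hkd i)) ρ) := by
        simp [Measure.real, volume_pi_pi]
    _ ≤ ∏ _i : Fin k, 2 * ρ := by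
        refine Finset.prod_le_prod (fun _ _ => measureReal_nonneg) fun i _ =>
          ENNReal.toReal_le_of_le_ofReal (by positivity) ?_
        rw [AddCircle.volume_closedBall]
        exact ENNReal.ofReal_le_ofReal (min_le_right _ _)
    _ = (2 * ρ) ^ k := by simp

namespace CircleAbundance

variable {C ℓ : ℝ}

theorem le_one (h : CircleAbundance k a C ℓ) : C ≤ 1 := by
  simpa using h Set.univ isClosed_univ (by simp)

theorem le_card_mul (h : CircleAbundance k a C ℓ) (ha : Function.Injective a) (hkd : k ≤ d)
    {ι : Type*} {P : Finset ι} (hP : P.Nonempty) {x : ι → UnitAddCircle} {ρ : ℝ} (hρ0 : 0 < ρ)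
    (hρ1 : 2 * ρ ≤ 1) (hsep : (P : Set ι).Pairwise fun e e' => 2 * ρ < ‖x e - x e'‖)
    {Q : Finset (Fin d → ι)}
    (hQ : ∀ q : Fin d → ι, (∀ i, q i ∈ P) → ∀ c : UnitAddTorus (Fin k),
      (∀ i, polyEval c (a i) ∈ Metric.closedBall (x (q i)) ρ) → q ∈ Q) :
    C * (P.card * (2 * ρ)) ^ ℓ ≤ Q.card * (2 * ρ) ^ k := by
  set A : Set UnitAddCircle := ⋃ e ∈ P, Metric.closedBall (x e) ρ with hA
  have hAvol : volume.real A = P.card * (2 * ρ) := measureReal_biUnion_closedBall hρ0.le hρ1 hsep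
  have hAclosed : IsClosed A :=
    P.finite_toSet.isClosed_biUnion fun e _ => Metric.isClosed_closedBall
  have hApos : 0 < volume A := by
    have : 0 < volume.real A := by
      rw [hAvol]
      have := hP.card_pos
      positivity
    exact (ENNReal.toReal_pos_iff.1 this).1
  have hcover : {c : UnitAddTorus (Fin k) | ∀ i, polyEval c (a i) ∈ A} ⊆
      ⋃ q ∈ Q, {c | ∀ i, polyEval c (a i) ∈ Metric.closedBall (x (q i)) ρ} := by
    intro c hc
    simp only [hA, Set.mem_ofPred_eq, Set.mem_iUnion₂, exists_prop] at hc
    choose q hqP hqc using hc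
    exact Set.mem_iUnion₂.2 ⟨q, hQ q hqP c hqc, hqc⟩
  calc C * (P.card * (2 * ρ)) ^ ℓ
      ≤ volume.real {c : UnitAddTorus (Fin k) | ∀ i, polyEval c (a i) ∈ A} :=
        hAvol ▸ h A hAclosed hApos
    _ ≤ volume.real (⋃ q ∈ Q, {c : UnitAddTorus (Fin k) |
          ∀ i, polyEval c (a i) ∈ Metric.closedBall (x (q i)) ρ}) :=
        measureReal_mono hcover (measure_ne_top _ _)
    _ ≤ ∑ q ∈ Q, volume.real {c : UnitAddTorus (Fin k) |
          ∀ i, polyEval c (a i) ∈ Metric.closedBall (x (q i)) ρ} :=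
        measureReal_biUnion_finset_le _ _
    _ ≤ ∑ _q ∈ Q, (2 * ρ) ^ k :=
        Finset.sum_le_sum fun q _ => measureReal_polyEval_mem_closedBall_le ha hkd _ hρ0.le
    _ = Q.card * (2 * ρ) ^ k := by simp

end CircleAbundance

end ConfigurationCounting

section Transference

variable {k d : ℕ} {a : Fin d → ℕ}

theorem norm_sum_zsmul_lt_of_mem_closedBall {κ G : Type*} [Fintype κ] [SeminormedAddCommGroup G]
    {φ : κ → ℤ} {K : ℕ} (hK : ∑ i, |φ i| < K) {x y : κ → G} {ρ : ℝ} (hρ : 0 < ρ)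
    (hx : ∑ i, φ i • x i = 0) (hxy : ∀ i, x i ∈ Metric.closedBall (y i) ρ) :
    ‖∑ i, φ i • y i‖ < K * ρ := by
  calc ‖∑ i, φ i • y i‖ = ‖∑ i, φ i • (x i - y i)‖ := by
        simp [smul_sub, Finset.sum_sub_distrib, hx]
    _ ≤ ∑ i, |φ i| * ρ := by
        refine (norm_sum_le _ _).trans (Finset.sum_le_sum fun i _ => ?_)
        refine (norm_zsmul_le _ _).trans ?_
        rw [Int.norm_eq_abs, Int.cast_abs, ← dist_eq_norm]
        exact mul_le_mul_of_nonneg_left (hxy i) (abs_nonneg _)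
    _ < K * ρ := by
        rw [← Finset.sum_mul]
        exact mul_lt_mul_of_pos_right (by exact_mod_cast hK) hρ

theorem abs_sum_mul_lt {κ : Type*} [Fintype κ] {φ : κ → ℤ} {K : ℕ} (hK : ∑ i, |φ i| < K) {N : ℕ}
    (hN : 0 < N) {e : κ → ℕ} (he : ∀ i, e i < N) : |∑ i, φ i * (e i : ℤ)| < (K * N : ℕ) := by
  calc |∑ i, φ i * (e i : ℤ)| ≤ ∑ i, |φ i| * N := by
        refine (Finset.abs_sum_le_sum_abs _ _).trans (Finset.sum_le_sum fun i _ => ?_)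
        rw [abs_mul, Nat.abs_cast]
        exact mul_le_mul_of_nonneg_left (by exact_mod_cast (he i).le) (abs_nonneg _)
    _ < (K * N : ℕ) := by
        rw [← Finset.sum_mul, Nat.cast_mul]
        exact mul_lt_mul_of_pos_right hK (by exact_mod_cast hN)

theorem exists_forall_inVm_of_polyEval_mem_closedBall (k : ℕ) (a : Fin d → ℕ) :
    ∃ K : ℕ, 2 ≤ K ∧ ∀ m N : ℕ, 0 < N → ∀ q : Fin d → Fin m → ℕ, (∀ i j, q i j < N) →
      ∀ c : UnitAddTorus (Fin k),
        (∀ i, polyEval c (a i) ∈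
          Metric.closedBall (digitPoint (K * N) (q i)) (1 / (2 * (K * (K * N) ^ m)))) →
        inVm (powerSpan k a) q := by
  obtain ⟨r, φ, hφ⟩ := exists_int_forms_mem_iff (powerSpan k a)
  have hannih (s : Fin r) (j : Fin k) : ∑ i, φ s i * (a i : ℤ) ^ (j : ℕ) = 0 := by
    exact_mod_cast (hφ _).1 (Submodule.subset_span (Set.mem_range_self j)) s
  obtain ⟨K, hK2, hK⟩ : ∃ K : ℕ, 2 ≤ K ∧ ∀ s, ∑ i, |φ s i| < K := by
    obtain ⟨B, hB⟩ := (Set.finite_range fun s => ∑ i, |φ s i|).bddAbove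
    exact ⟨B.toNat + 2, by lia, fun s => by have := hB (Set.mem_range_self s); lia⟩
  refine ⟨K, hK2, fun m N hN q hq c hc j => (hφ _).2 fun s => ?_⟩
  have hsmall : ‖∑ i, φ s i • digitPoint (K * N) (q i)‖ < 1 / ((K * N) ^ m : ℕ) := by
    refine (norm_sum_zsmul_lt_of_mem_closedBall (hK s) (by positivity)
      (sum_zsmul_polyEval_eq_zero (hannih s) c) hc).trans_le ?_
    push_cast
    field_simp
    norm_num
  exact_mod_cast sum_mul_eq_zero_of_norm_digitPoint_lt (by positivity)
    (fun j => abs_sum_mul_lt (hK s) hN fun i => hq i j) hsmall j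

namespace CircleAbundance

variable {C ℓ : ℝ}

theorem le_ncard_div (h : CircleAbundance k a C ℓ) (ha : Function.Injective a) (hkd : k ≤ d)
    {K m N : ℕ} (hK : 2 ≤ K) (hN : 0 < N)
    (hnear : ∀ q : Fin d → Fin m → ℕ, (∀ i j, q i j < N) → ∀ c : UnitAddTorus (Fin k),
      (∀ i, polyEval c (a i) ∈
        Metric.closedBall (digitPoint (K * N) (q i)) (1 / (2 * (K * (K * N) ^ m)))) →
      inVm (powerSpan k a) q)
    {E : Set (Fin m → ℕ)} (hE : E.Nonempty) (hEN : ∀ x ∈ E, ∀ j, x j < N) :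
    C * (E.ncard / (K * (K * N) ^ m)) ^ ℓ ≤
      {q : Fin d → Fin m → ℕ | (∀ i, q i ∈ E) ∧ inVm (powerSpan k a) q}.ncard /
        (K * (K * N) ^ m : ℝ) ^ k := by
  have hEfin : E.Finite := (Set.Finite.pi' fun _ => Set.finite_Iio N).subset hEN
  have hQfin : {q : Fin d → Fin m → ℕ | (∀ i, q i ∈ E) ∧ inVm (powerSpan k a) q}.Finite :=
    (Set.Finite.pi' fun _ => hEfin).subset fun q hq => hq.1
  set ρ : ℝ := 1 / (2 * (K * (K * N) ^ m)) with hρ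
  have htwoρ : 2 * ρ = 1 / (K * (K * N) ^ m) := by
    rw [hρ]
    field_simp
  have hρlt : 2 * ρ < 1 / ((K * N) ^ m : ℕ) := by
    rw [htwoρ]
    push_cast
    have : (1 : ℝ) < K := by exact_mod_cast hK
    gcongr
    exact lt_mul_of_one_lt_left (by positivity) this
  have hρ1 : 2 * ρ ≤ 1 := hρlt.le.trans (by rw [one_div]; exact Nat.cast_inv_le_one _)
  have hsep : (hEfin.toFinset : Set (Fin m → ℕ)).Pairwise fun e e' =>
      2 * ρ < ‖digitPoint (K * N) e - digitPoint (K * N) e'‖ := by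
    have hlt {e : Fin m → ℕ} (he : e ∈ E) (j : Fin m) : e j < K * N :=
      (hEN e he j).trans_le (Nat.le_mul_of_pos_left _ (by lia))
    rw [hEfin.coe_toFinset]
    exact fun e he e' he' hne =>
      hρlt.trans_le (one_div_pow_le_norm_digitPoint_sub (hlt he) (hlt he') hne)
  have hcount := h.le_card_mul ha hkd (hEfin.toFinset_nonempty.2 hE) (by positivity) hρ1 hsep
    (Q := hQfin.toFinset) fun q hq c hc => by
      simp only [hEfin.mem_toFinset] at hq
      exact hQfin.mem_toFinset.2 ⟨hq, hnear q (fun i => hEN _ (hq i)) c hc⟩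
  simpa only [← Set.ncard_eq_toFinset_card _ hEfin, ← Set.ncard_eq_toFinset_card _ hQfin, htwoρ,
    one_div_pow, mul_one_div] using hcount

theorem le_Dmn_of_dim_eq_zero (h : CircleAbundance k a C ℓ) {N : ℕ} (hN : 0 < N)
    {E : Set (Fin 0 → ℕ)} (hE : E.Nonempty) :
    C * dmn 0 N E ^ ℓ ≤ Dmn (powerSpan k a) 0 N E := by
  have hpos := ncard_inVm_pos (m := 0) (powerSpan k a) hN
  have hEuniv : E = Set.univ := Subsingleton.eq_univ_of_nonempty hE
  have hD : Dmn (powerSpan k a) 0 N E = 1 := by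
    simpa [Dmn, hEuniv] using div_self (Nat.cast_ne_zero (R := ℝ).2 hpos.ne')
  rw [hD]
  simpa [dmn, hEuniv] using h.le_one

theorem le_Dmn_of_forall_inVm (h : CircleAbundance k a C ℓ) (hC : 0 ≤ C) (hℓ : 0 ≤ ℓ)
    (ha : Function.Injective a) (hkd : k ≤ d) {K m N : ℕ} (hK : 2 ≤ K) (hm : m ≠ 0) (hN : 0 < N)
    (hnear : ∀ q : Fin d → Fin m → ℕ, (∀ i j, q i j < N) → ∀ c : UnitAddTorus (Fin k),
      (∀ i, polyEval c (a i) ∈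
        Metric.closedBall (digitPoint (K * N) (q i)) (1 / (2 * (K * (K * N) ^ m)))) →
      inVm (powerSpan k a) q)
    {E : Set (Fin m → ℕ)} (hE : E.Nonempty) (hEN : ∀ x ∈ E, ∀ j, x j < N) :
    C * ((1 / (K * K : ℝ)) ^ ℓ) ^ m * dmn m N E ^ ℓ ≤ Dmn (powerSpan k a) m N E := by
  have hK1 : (1 : ℝ) ≤ K := by exact_mod_cast one_le_two.trans hK
  have hd0 : 0 ≤ dmn m N E := by unfold dmn; positivity
  have hdensity : (1 / (K * K : ℝ)) ^ m * dmn m N E ≤ E.ncard / (K * (K * N) ^ m) := by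
    have hKm : (K : ℝ) ≤ K ^ m := le_self_pow₀ hK1 hm
    calc (1 / (K * K : ℝ)) ^ m * dmn m N E = E.ncard / (K ^ m * (K * N) ^ m) := by
          rw [dmn, one_div_pow, mul_pow, mul_pow]
          field_simp
      _ ≤ E.ncard / (K * (K * N) ^ m) := by gcongr
  calc C * ((1 / (K * K : ℝ)) ^ ℓ) ^ m * dmn m N E ^ ℓ
      = C * ((1 / (K * K : ℝ)) ^ m * dmn m N E) ^ ℓ := by
        rw [Real.mul_rpow (by positivity) hd0, Real.rpow_pow_comm (by positivity), mul_assoc]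
    _ ≤ C * (E.ncard / (K * (K * N) ^ m)) ^ ℓ := by gcongr
    _ ≤ {q : Fin d → Fin m → ℕ | (∀ i, q i ∈ E) ∧ inVm (powerSpan k a) q}.ncard /
          (K * (K * N) ^ m : ℝ) ^ k := h.le_ncard_div ha hkd hK hN hnear hE hEN
    _ ≤ {q : Fin d → Fin m → ℕ | (∀ i, q i ∈ E) ∧ inVm (powerSpan k a) q}.ncard /
          ((N : ℝ) ^ m) ^ k := by
        gcongr
        rw [mul_pow, ← mul_assoc]
        exact le_mul_of_one_le_left (by positivity)
          (one_le_mul_of_one_le_of_one_le hK1 (one_le_pow₀ hK1))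
    _ ≤ Dmn (powerSpan k a) m N E := ncard_div_le_Dmn ha hkd hN E

theorem exists_forall_le_Dmn (ha : Function.Injective a) (hkd : k ≤ d) (hℓ : 0 < ℓ) :
    ∃ β : ℝ, 0 < β ∧ ∀ C : ℝ, 0 ≤ C → CircleAbundance k a C ℓ → ∀ m N : ℕ, 0 < N →
      ∀ E : Set (Fin m → ℕ), (∀ x ∈ E, ∀ j, x j < N) →
        C * β ^ m * dmn m N E ^ ℓ ≤ Dmn (powerSpan k a) m N E := by
  obtain ⟨K, hK, hnear⟩ := exists_forall_inVm_of_polyEval_mem_closedBall k a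
  refine ⟨(1 / (K * K : ℝ)) ^ ℓ, by positivity, fun C hC h m N hN E hEN => ?_⟩
  rcases E.eq_empty_or_nonempty with rfl | hE
  · have hd : dmn m N ∅ = 0 := by simp [dmn]
    rw [hd, Real.zero_rpow hℓ.ne', mul_zero]
    unfold Dmn
    positivity
  rcases eq_or_ne m 0 with rfl | hm
  · simpa using h.le_Dmn_of_dim_eq_zero hN hE
  · exact h.le_Dmn_of_forall_inVm hC hℓ.le ha hkd hK hm hN (hnear m N hN) hE hEN

end CircleAbundance

end Transference

theorem exists_not_isOfFinAddOrder : ∃ α : UnitAddCircle, ¬IsOfFinAddOrder α := by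
  refine ⟨(√2 : ℝ), AddCircle.not_isOfFinAddOrder_iff_forall_rat_ne_div.2 fun q hq => ?_⟩
  exact irrational_sqrt_two ⟨q, by simpa using hq⟩

theorem optimal_recurrence_implies_abundance_general {d : ℕ} (hd : 3 ≤ d) {a : Fin d → ℕ}
    (ha : Function.Injective a) {ℓ : ℝ} (hℓ : 0 < ℓ) :
    ∃ β : ℝ, 0 < β ∧ ∀ C : ℝ, 0 < C → ∀ α : UnitAddCircle, ¬IsOfFinAddOrder α →
      BohrRecurrenceBound a C ℓ volume (skewShift α) →
      ∀ m N : ℕ, 0 < N → ∀ E : Set (Fin m → ℕ), (∀ x ∈ E, ∀ j, x j < N) →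
        C * β ^ m * dmn m N E ^ ℓ ≤ Dmn (powerSpan 3 a) m N E := by
  obtain ⟨β, hβ, habundance⟩ := CircleAbundance.exists_forall_le_Dmn ha hd hℓ
  exact ⟨β, hβ, fun C hC α hα h => habundance C hC.le (skewShift.circleAbundance hα h)⟩

theorem optimal_recurrence_implies_abundance
    (a : Fin 4 → ℕ) (ha : Function.Injective a)
    (V : Submodule ℚ (Fin 4 → ℚ))
    (hV : V = Submodule.span ℚ
      (Set.range fun i : Fin 3 => fun j : Fin 4 => ((a j : ℚ) ^ (i : ℕ))))
    (C ℓ : ℝ) (hC : 0 < C) (hℓ : 4 ≤ ℓ)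
    (hyp : ∀ (X : Type) (_ : MeasurableSpace X) (μ : Measure X),
      IsProbabilityMeasure μ → ∀ T : X → X, Ergodic T μ →
      ∀ A : Set X, MeasurableSet A → 0 < μ A →
      ∃ S : Set ℕ, IsFiniteRankBohr0 S ∧
        ∀ ε : ℝ, 0 < ε → ∀ L : ℕ, ∃ M N : ℕ, M < N ∧ N - M > L ∧
          (S ∩ Set.Ico M N).Nonempty ∧
          (∑ᶠ n ∈ S ∩ Set.Ico M N, (μ (⋂ i : Fin 4, T^[a i * n] ⁻¹' A)).toReal) /
              ((S ∩ Set.Ico M N).ncard : ℝ)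
            > C * (μ A).toReal ^ ℓ - ε) :
    ∃ β : ℝ, 0 < β ∧ ∀ m : ℕ, ∃ N₀ : ℕ, ∀ N ≥ N₀, ∀ E : Set (Fin m → ℕ),
      (∀ x ∈ E, ∀ j, x j < N) →
      Dmn V m N E ≥ C * β ^ m * dmn m N E ^ ℓ := by
  subst hV
  obtain ⟨α, hα⟩ := exists_not_isOfFinAddOrder
  obtain ⟨β, hβ, habundance⟩ :=
    optimal_recurrence_implies_abundance_general (by simp) ha (four_pos.trans_le hℓ)
  have hrec := hyp _ _ volume inferInstance (skewShift α) (skewShift.ergodic hα)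
  exact ⟨β, hβ, fun m => ⟨1, fun N hN => habundance C hC α hα hrec m N hN⟩⟩
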